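/- arXiv:math/0604399 — 5 statements merged into one kernel-verified Lean document; each statement's English description precedes it below -/
import Mathlib

section
/- Let G be a group, H a normal subgroup of G, and suppose G = G'⟨x_1, …, x_m⟩ for elements x_1, …, x_m ∈ G, where G' = [G,G]. Then for every n ≥ 1, [H,G] = [H,x_1][H,x_2]…[H,x_m]·[H,_n G], meaning: every element of the subgroup [H,G] is a product c_1 c_2 … c_m w with c_i ∈ [H,x_i] = {[h,x_i] : h ∈ H} and w an element of the subgroup [H,_n G]. -/
/-- The set `[H,x] = {h⁻¹x⁻¹hx : h ∈ H}`. -/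
def commSet {G : Type*} [Group G] (H : Subgroup G) (x : G) : Set G :=
  (fun h : G => h⁻¹ * x⁻¹ * h * x) '' (H : Set G)

/-- `[H,G]`: the subgroup generated by all commutators `[h,g] = h⁻¹g⁻¹hg`. -/
def commutatorSubgroupWith {G : Type*} [Group G] (H : Subgroup G) : Subgroup G :=
  Subgroup.closure {x : G | ∃ h ∈ H, ∃ g : G, h⁻¹ * g⁻¹ * h * g = x}

/-- The iterated commutator subgroup `[H,_n G]`: `[H,_1 G] = [H,G]`,
`[H,_{n+1} G] = [[H,_n G], G]`. -/
def iteratedCommutatorWith {G : Type*} [Group G] (H : Subgroup G) : ℕ → Subgroup G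
  | 0 => H
  | n + 1 => commutatorSubgroupWith (iteratedCommutatorWith H n)

/-!
If `[K,G]` is central, then `(g, k) ↦ [k,g]` is bimultiplicative with values in an abelian group.
As a homomorphism in `g` it kills `G'`, so if `G = G'⟨x₁, …, x_m⟩` then `[K,G]` is the product of
the subgroups `[K,xᵢ]`. Applied modulo `[K,G,G]` with `K = [H,_n G]`, this writes an error term
`w ∈ [H,_{n+1} G]` as `∏ [kᵢ,xᵢ]` up to `[H,_{n+2} G]`. The factors `[kᵢ,xᵢ]` are central there, so
each is absorbed through `[hᵢ,xᵢ][kᵢ,xᵢ] ≡ [hᵢkᵢ,xᵢ]`, and induction on `n` finishes.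
-/

open Subgroup
open scoped commutatorElement IsMulCommutative

theorem iSup_range_eq_of_commutator_sup_closure_eq_top {G K A ι : Type*} [Group G]
    [Group K] [CommGroup A] (Φ : G →* K →* A) {x : ι → G}
    (hx : commutator G ⊔ closure (Set.range x) = ⊤) :
    ⨆ g, (Φ g).range = ⨆ i, (Φ (x i)).range := by
  set S : Subgroup A := ⨆ i, (Φ (x i)).range
  let Ψ : G →* K →* A ⧸ S := (MonoidHom.compHom (QuotientGroup.mk' S)).comp Φ
  have closure_le_ker : closure (Set.range x) ≤ Ψ.ker := by
    rw [closure_le]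
    rintro _ ⟨i, rfl⟩
    refine MonoidHom.mem_ker.2 (MonoidHom.ext fun k => ?_)
    exact (QuotientGroup.eq_one_iff _).2 (mem_iSup_of_mem i ⟨k, rfl⟩)
  have ker_eq_top : Ψ.ker = ⊤ :=
    top_le_iff.1 (hx.ge.trans (sup_le (Abelianization.commutator_subset_ker Ψ) closure_le_ker))
  refine le_antisymm (iSup_le fun g => ?_) (iSup_le fun i => le_iSup (fun g => (Φ g).range) (x i))
  rintro _ ⟨k, rfl⟩
  have Ψ_apply : Ψ g = 1 := MonoidHom.mem_ker.1 (ker_eq_top ▸ mem_top g)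
  exact (QuotientGroup.eq_one_iff _).1 (DFunLike.congr_fun Ψ_apply k)

theorem exists_prod_eq_of_mem_iSup_range {ι A : Type*} {K : ι → Type*} [Fintype ι]
    [∀ i, Group (K i)] [CommGroup A] (φ : ∀ i, K i →* A) {a : A}
    (ha : a ∈ ⨆ i, (φ i).range) : ∃ k : ∀ i, K i, ∏ i, φ i (k i) = a := by
  have hcomm : Pairwise fun i j => ∀ a b, Commute (φ i a) (φ j b) :=
    fun _ _ _ _ _ => Commute.all _ _
  rw [← MonoidHom.noncommPiCoprod_range (hcomm := hcomm)] at ha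
  obtain ⟨k, rfl⟩ := ha
  exact ⟨k, by simp [MonoidHom.noncommPiCoprod, Finset.noncommProd_eq_prod]⟩

theorem prod_ofFn_mul_of_mem_center {M : Type*} [Monoid M] {m : ℕ} (a b : Fin m → M)
    (hb : ∀ i, b i ∈ Submonoid.center M) :
    (List.ofFn fun i => a i * b i).prod = (List.ofFn a).prod * (List.ofFn b).prod := by
  induction m with
  | zero => simp
  | succ m ih =>
    simp only [List.ofFn_succ, List.prod_cons, ih _ _ fun i => hb i.succ]
    rw [mul_assoc, mul_assoc, ← mul_assoc (b 0), ← Submonoid.mem_center_iff.1 (hb 0), mul_assoc]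

theorem commutator_sup_closure_range_map_eq_top {G Q ι : Type*} [Group G] [Group Q]
    {f : G →* Q} (hf : Function.Surjective f) {x : ι → G}
    (hx : commutator G ⊔ closure (Set.range x) = ⊤) :
    commutator Q ⊔ closure (Set.range (f ∘ x)) = ⊤ := by
  have map_eq := congrArg (Subgroup.map f) hx
  rwa [Subgroup.map_sup, commutator_def, map_commutator, map_top_of_surjective f hf,
    MonoidHom.map_closure, ← Set.range_comp] at map_eq

section Commutators

variable {G : Type*} [Group G]

theorem commutatorElement_mul_left_of_mem_center {a b c : G} (h : ⁅b, c⁆ ∈ center G) :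
    ⁅a * b, c⁆ = ⁅a, c⁆ * ⁅b, c⁆ := by
  rw [commutatorElement_mul_left_eq_conj_mul, mem_center_iff.1 h a, mul_inv_cancel_right,
    mem_center_iff.1 h]

theorem commutatorElement_mul_right_of_mem_center {a b c : G} (h : ⁅a, c⁆ ∈ center G) :
    ⁅a, b * c⁆ = ⁅a, b⁆ * ⁅a, c⁆ := by
  rw [commutatorElement_mul_right_eq_mul_conj, mul_assoc, mul_assoc, ← mul_assoc b,
    mem_center_iff.1 h b, mul_inv_cancel_right]

/-- The commutator pairing `g ↦ k ↦ ⁅k, g⁆` of a subgroup `K` with `[K,G]` central, as a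
homomorphism in both variables. The group variable comes first, so that partial evaluation at `g`
has range `[K,g]`. -/
def centralCommutatorHom (K : Subgroup G) (hK : ⁅K, (⊤ : Subgroup G)⁆ ≤ center G) :
    G →* K →* center G :=
  have commutator_mem_center (k : K) (g : G) : ⁅(k : G), g⁆ ∈ center G :=
    hK (commutator_mem_commutator k.2 (mem_top g))
  MonoidHom.mk'
    (fun g => MonoidHom.mk' (fun k => ⟨⁅(k : G), g⁆, commutator_mem_center k g⟩) fun _ b =>
      Subtype.ext (commutatorElement_mul_left_of_mem_center (commutator_mem_center b g)))
    fun _ b => MonoidHom.ext fun k =>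
      Subtype.ext (commutatorElement_mul_right_of_mem_center (commutator_mem_center k b))

theorem commutator_top_le_map_iSup_range_centralCommutatorHom (K : Subgroup G)
    (hK : ⁅K, (⊤ : Subgroup G)⁆ ≤ center G) :
    ⁅K, (⊤ : Subgroup G)⁆ ≤
      (⨆ g, (centralCommutatorHom K hK g).range).map (center G).subtype :=
  commutator_le.2 fun k hk g _ =>
    ⟨centralCommutatorHom K hK g ⟨k, hk⟩, mem_iSup_of_mem g ⟨⟨k, hk⟩, rfl⟩, rfl⟩

variable {m : ℕ} {x : Fin m → G}

theorem exists_prod_commutatorElement_eq (hx : commutator G ⊔ closure (Set.range x) = ⊤)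
    {K : Subgroup G} (hK : ⁅K, (⊤ : Subgroup G)⁆ ≤ center G) {w : G}
    (hw : w ∈ ⁅K, (⊤ : Subgroup G)⁆) :
    ∃ k : Fin m → K, (List.ofFn fun i => ⁅(k i : G), x i⁆).prod = w := by
  obtain ⟨z, hz, rfl⟩ := commutator_top_le_map_iSup_range_centralCommutatorHom K hK hw
  obtain ⟨k, rfl⟩ := exists_prod_eq_of_mem_iSup_range _
    ((iSup_range_eq_of_commutator_sup_closure_eq_top _ hx).le hz)
  refine ⟨k, ?_⟩
  rw [← List.prod_ofFn, map_list_prod, List.map_ofFn]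
  rfl

theorem exists_prod_commutatorElement_mul_left_eq_prod_mul
    (hx : commutator G ⊔ closure (Set.range x) = ⊤) {K : Subgroup G}
    (hK : ⁅K, (⊤ : Subgroup G)⁆ ≤ center G) (h : Fin m → G) {w : G}
    (hw : w ∈ ⁅K, (⊤ : Subgroup G)⁆) :
    ∃ k : Fin m → K, (List.ofFn fun i => ⁅h i * k i, x i⁆).prod =
      (List.ofFn fun i => ⁅h i, x i⁆).prod * w := by
  obtain ⟨k, rfl⟩ := exists_prod_commutatorElement_eq hx hK hw
  have commutator_mem_center (i : Fin m) : ⁅(k i : G), x i⁆ ∈ center G :=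
    hK (commutator_mem_commutator (k i).2 (mem_top (x i)))
  refine ⟨k, ?_⟩
  simp only [commutatorElement_mul_left_of_mem_center (commutator_mem_center _),
    prod_ofFn_mul_of_mem_center _ _ commutator_mem_center]

instance normal_commutator_top (K : Subgroup G) : ⁅K, (⊤ : Subgroup G)⁆.Normal :=
  normalizer_eq_top_iff.1 (top_le_iff.1 (normalizer_commutator_ge_right K ⊤))

theorem map_mk'_commutator_top_le_center (K : Subgroup G) :
    K.map (QuotientGroup.mk' ⁅K, (⊤ : Subgroup G)⁆) ≤ center (G ⧸ ⁅K, (⊤ : Subgroup G)⁆) := by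
  rw [← commutator_top_right_eq_bot_iff_le_center,
    ← map_top_of_surjective _ (QuotientGroup.mk'_surjective _), ← map_commutator,
    QuotientGroup.map_mk'_self]

theorem exists_prod_commutatorElement_mul_left_mul_eq_prod_mul
    (hx : commutator G ⊔ closure (Set.range x) = ⊤) (K : Subgroup G) (h : Fin m → G) {w : G}
    (hw : w ∈ ⁅K, (⊤ : Subgroup G)⁆) :
    ∃ k : Fin m → K, ∃ v ∈ ⁅⁅K, (⊤ : Subgroup G)⁆, (⊤ : Subgroup G)⁆,
      (List.ofFn fun i => ⁅h i * k i, x i⁆).prod * v =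
        (List.ofFn fun i => ⁅h i, x i⁆).prod * w := by
  let π := QuotientGroup.mk' ⁅⁅K, (⊤ : Subgroup G)⁆, (⊤ : Subgroup G)⁆
  have hπ : Function.Surjective π := QuotientGroup.mk'_surjective _
  have map_commutator_eq :
      ⁅K, (⊤ : Subgroup G)⁆.map π = ⁅K.map π, (⊤ : Subgroup (G ⧸ _))⁆ := by
    rw [map_commutator, map_top_of_surjective π hπ]
  have central : ⁅K.map π, (⊤ : Subgroup (G ⧸ _))⁆ ≤ center _ :=
    map_commutator_eq ▸ map_mk'_commutator_top_le_center ⁅K, (⊤ : Subgroup G)⁆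
  obtain ⟨k', hk'⟩ := exists_prod_commutatorElement_mul_left_eq_prod_mul
    (commutator_sup_closure_range_map_eq_top hπ hx) central (π ∘ h)
    (map_commutator_eq ▸ mem_map_of_mem π hw)
  choose k hk π_k using fun i => (k' i).2
  have prod_eq : π (List.ofFn fun i => ⁅h i * k i, x i⁆).prod =
      π ((List.ofFn fun i => ⁅h i, x i⁆).prod * w) := by
    simpa [map_list_prod, List.map_ofFn, Function.comp_def, map_commutatorElement, π_k] using hk'
  exact ⟨fun i => ⟨k i, hk i⟩, _, QuotientGroup.eq.1 prod_eq, mul_inv_cancel_left _ _⟩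

end Commutators

section Conventions

variable {G : Type*} [Group G]

theorem commutatorElement_inv_right_mem_commSet {H : Subgroup G} {h : G} (hh : h ∈ H) (x : G) :
    ⁅h, x⁻¹⁆ ∈ commSet H x :=
  ⟨h⁻¹, H.inv_mem hh, by simp [commutatorElement_def]⟩

variable (H : Subgroup G)

theorem commutatorSubgroupWith_eq_commutator_top :
    commutatorSubgroupWith H = ⁅H, (⊤ : Subgroup G)⁆ := by
  apply le_antisymm
  · refine (closure_le _).2 ?_
    rintro _ ⟨h, hh, g, rfl⟩
    simpa [commutatorElement_def] using
      commutator_mem_commutator (H.inv_mem hh) (mem_top g⁻¹)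
  · refine commutator_le.2 fun h hh g _ => subset_closure ⟨h⁻¹, H.inv_mem hh, g⁻¹, ?_⟩
    simp [commutatorElement_def]

theorem iteratedCommutatorWith_succ (n : ℕ) :
    iteratedCommutatorWith H (n + 1) = ⁅iteratedCommutatorWith H n, (⊤ : Subgroup G)⁆ :=
  commutatorSubgroupWith_eq_commutator_top _

theorem iteratedCommutatorWith_le [H.Normal] (n : ℕ) : iteratedCommutatorWith H n ≤ H := by
  induction n with
  | zero => exact le_rfl
  | succ n ih =>
    rw [iteratedCommutatorWith_succ]
    exact (commutator_mono ih le_rfl).trans (commutator_le_left H ⊤)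

theorem exists_prod_commutatorElement_mul_eq_of_mem_commutator_top [H.Normal] {m : ℕ}
    {x : Fin m → G} (hx : commutator G ⊔ closure (Set.range x) = ⊤) (n : ℕ) {g : G}
    (hg : g ∈ ⁅H, (⊤ : Subgroup G)⁆) :
    ∃ h : Fin m → H, ∃ w ∈ iteratedCommutatorWith H (n + 1),
      (List.ofFn fun i => ⁅(h i : G), x i⁆).prod * w = g := by
  induction n with
  | zero => exact ⟨1, g, (iteratedCommutatorWith_succ H 0).ge hg, by simp⟩
  | succ n ih =>
    obtain ⟨h, w, hw, rfl⟩ := ih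
    rw [iteratedCommutatorWith_succ] at hw
    obtain ⟨k, v, hv, prod_eq⟩ :=
      exists_prod_commutatorElement_mul_left_mul_eq_prod_mul hx _ (h ·) hw
    refine ⟨fun i => h i * ⟨k i, iteratedCommutatorWith_le H n (k i).2⟩, v, ?_, prod_eq⟩
    rwa [iteratedCommutatorWith_succ, iteratedCommutatorWith_succ]

end Conventions

/-- **Lemma 2.4.** If `H ◁ G` and `G = G'⟨x₁,…,x_m⟩` then for every `n ≥ 1` every
element of `[H,G]` is a product `c₁ ⋯ c_m w` with `cᵢ ∈ [H,xᵢ]` and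
`w ∈ [H,_n G]`. -/
theorem nilp_comm {G : Type*} [Group G] (H : Subgroup G) (hH : H.Normal)
    (m : ℕ) (x : Fin m → G)
    (hgen : commutatorSubgroupWith (⊤ : Subgroup G) ⊔ Subgroup.closure (Set.range x) = ⊤)
    (n : ℕ) (hn : 1 ≤ n) :
    ∀ g ∈ commutatorSubgroupWith H,
      ∃ (c : Fin m → G) (w : G),
        (∀ i, c i ∈ commSet H (x i)) ∧ w ∈ iteratedCommutatorWith H n ∧
          (List.ofFn c).prod * w = g := by
  intro g hg
  -- `h⁻¹x⁻¹hx` is `⁅h⁻¹, x⁻¹⁆` in Mathlib's convention `⁅h, g⁆ = hgh⁻¹g⁻¹`.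
  have generates_inv :
      commutator G ⊔ Subgroup.closure (Set.range fun i => (x i)⁻¹) = ⊤ := by
    rwa [← Set.inv_range, Subgroup.closure_inv, commutator_def,
      ← commutatorSubgroupWith_eq_commutator_top]
  rw [commutatorSubgroupWith_eq_commutator_top] at hg
  obtain ⟨h, w, hw, prod_eq⟩ :=
    exists_prod_commutatorElement_mul_eq_of_mem_commutator_top H generates_inv (n - 1) hg
  rw [Nat.sub_add_cancel hn] at hw
  exact ⟨_, w, fun i => commutatorElement_inv_right_mem_commSet (h i).2 (x i), hw, prod_eq⟩
end

section
/- Let D be a natural number such that every finite quasisimple group S satisfies S = c(S,S)^{*D}, i.e., every element of S is a product of D commutators. Then every finite quasi-semisimple group Q satisfies Q = c(Q,Q)^{*D}: every element of Q is a product of D commutators [x,y] with x, y ∈ Q. -/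
/-- A finite group `S` is quasisimple if `S = [S,S]` and `S/Z(S)` is a non-abelian
simple group. -/
def IsQuasisimple (S : Type*) [Group S] : Prop :=
  ⁅(⊤ : Subgroup S), (⊤ : Subgroup S)⁆ = ⊤ ∧
    IsSimpleGroup (S ⧸ Subgroup.center S) ∧
    ∃ a b : S ⧸ Subgroup.center S, a * b ≠ b * a

/-- A group `Q` is quasi-semisimple if `Q = [Q,Q]` and `Q/Z(Q)` is isomorphic to a
direct product of non-abelian simple groups. -/
def IsQuasiSemisimple (Q : Type*) [Group Q] : Prop :=
  ⁅(⊤ : Subgroup Q), (⊤ : Subgroup Q)⁆ = ⊤ ∧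
    ∃ (ι : Type) (T : ι → Type) (instT : ∀ i, Group (T i)),
      (∀ i, letI := instT i; IsSimpleGroup (T i) ∧ ∃ a b : T i, a * b ≠ b * a) ∧
      (letI := instT; Nonempty ((Q ⧸ Subgroup.center Q) ≃* ((i : ι) → T i)))

/-!
Let `p : Q → Q/Z(Q) ≃ ∏ i, T i` be the projection. The preimage of the factor `T i` need not be
perfect, but its commutator subgroup `S i` is: commutators in a central extension depend only on the
images of their entries, so passing to a smaller subgroup with the same image does not change the
commutator subgroup. For the same reason the `S i` generate the perfect group `Q`, and each `S i`
is quasisimple as a perfect central extension of `T i`. Commutators of elements lying over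
distinct factors are central, so the three subgroups lemma makes distinct `S i` commute.
Multiplication is thus a surjective homomorphism `∏ i, S i → Q`, and an expression as a product of
`D` commutators can be found one component at a time.
-/

open Subgroup Group
open scoped commutatorElement

section CommutatorWidth

/-- Every element of `G` is a product of `D` commutators, i.e. `G = c(G,G)^{*D}`. Commutators are
`x⁻¹y⁻¹xy`, which in Mathlib's convention is `⁅x⁻¹, y⁻¹⁆`. -/
def HasCommutatorWidthLE (G : Type*) [Group G] (D : ℕ) : Prop :=
  ∀ g : G, ∃ x y : Fin D → G, (List.ofFn fun k => (x k)⁻¹ * (y k)⁻¹ * x k * y k).prod = g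

variable {G K : Type*} [Group G] [Group K] {D : ℕ}

lemma map_prod_ofFn_commutators (f : G →* K) (x y : Fin D → G) :
    f (List.ofFn fun k => (x k)⁻¹ * (y k)⁻¹ * x k * y k).prod =
      (List.ofFn fun k => (f (x k))⁻¹ * (f (y k))⁻¹ * f (x k) * f (y k)).prod := by
  simp [map_list_prod, List.map_ofFn, Function.comp_def]

lemma HasCommutatorWidthLE.of_surjective (hG : HasCommutatorWidthLE G D) {f : G →* K}
    (hf : Function.Surjective f) : HasCommutatorWidthLE K D := by
  intro k
  obtain ⟨g, rfl⟩ := hf k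
  obtain ⟨x, y, rfl⟩ := hG g
  exact ⟨f ∘ x, f ∘ y, (map_prod_ofFn_commutators f x y).symm⟩

lemma HasCommutatorWidthLE.pi {ι : Type*} {S : ι → Type*} [∀ i, Group (S i)]
    (hS : ∀ i, HasCommutatorWidthLE (S i) D) : HasCommutatorWidthLE (∀ i, S i) D := by
  intro s
  choose x y hxy using fun i => hS i (s i)
  refine ⟨fun k i => x i k, fun k i => y i k, funext fun i => ?_⟩
  rw [← hxy i]
  exact map_prod_ofFn_commutators (Pi.evalMonoidHom S i) _ _

lemma HasCommutatorWidthLE.of_iSup_eq_top {ι : Type*} [Finite ι] {S : ι → Subgroup G}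
    (hcomm : Pairwise fun i j => ⁅S i, S j⁆ = ⊥) (htop : ⨆ i, S i = ⊤)
    (hS : ∀ i, HasCommutatorWidthLE (S i) D) : HasCommutatorWidthLE G D := by
  have := Fintype.ofFinite ι
  have hcommute : Pairwise fun i j => ∀ x y : G, x ∈ S i → y ∈ S j → Commute x y :=
    fun i j hij x y hx hy => commutatorElement_eq_one_iff_commute.1 <|
      mem_bot.1 <| hcomm hij ▸ commutator_mem_commutator hx hy
  refine (HasCommutatorWidthLE.pi hS).of_surjective (f := noncommPiCoprod hcommute) ?_
  rw [← MonoidHom.range_eq_top, noncommPiCoprod_range, htop]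

end CommutatorWidth

section Nonabelian

variable {G T : Type*} [Group G] [Group T]

lemma not_isMulCommutative_iff_exists : ¬IsMulCommutative G ↔ ∃ a b : G, a * b ≠ b * a := by
  simp [isMulCommutative_iff]

lemma not_isMulCommutative_of_surjective {f : G →* T} (hf : Function.Surjective f)
    (hT : ¬IsMulCommutative T) : ¬IsMulCommutative G := by
  rw [not_isMulCommutative_iff_exists] at hT ⊢
  obtain ⟨a, b, hab⟩ := hT
  obtain ⟨x, rfl⟩ := hf a
  obtain ⟨y, rfl⟩ := hf b
  exact ⟨x, y, fun h => hab (by rw [← map_mul, h, map_mul])⟩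

lemma isPerfect_of_isSimpleGroup [IsSimpleGroup T] (hT : ¬IsMulCommutative T) : IsPerfect T where
  commutator_eq_top :=
    (commutator_normal ⊤ ⊤).eq_bot_or_eq_top.resolve_left (mt (commutator_eq_bot_iff T).1 hT)

lemma center_eq_bot_of_isSimpleGroup [IsSimpleGroup T] (hT : ¬IsMulCommutative T) :
    center T = ⊥ :=
  (inferInstance : (center T).Normal).eq_bot_or_eq_top.resolve_right (mt center_eq_top_iff.1 hT)

end Nonabelian

section CentralExtension

variable {G K : Type*} [Group G] [Group K] {p : G →* K}

lemma center_eq_ker_of_surjective (hsurj : Function.Surjective p) (hker : p.ker ≤ center G)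
    (hK : center K = ⊥) : center G = p.ker := by
  refine le_antisymm (fun z hz => ?_) hker
  rw [MonoidHom.mem_ker, ← mem_bot, ← hK, mem_center_iff]
  intro k
  obtain ⟨g, rfl⟩ := hsurj k
  rw [← map_mul, ← map_mul, mem_center_iff.1 hz g]

lemma isQuasisimple_of_surjective [IsPerfect G] [IsSimpleGroup K] (hK : ¬IsMulCommutative K)
    (hsurj : Function.Surjective p) (hker : p.ker ≤ center G) : IsQuasisimple G := by
  have hcenter : center G = p.ker :=
    center_eq_ker_of_surjective hsurj hker (center_eq_bot_of_isSimpleGroup hK)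
  let e : G ⧸ center G ≃* K := (QuotientGroup.quotientMulEquivOfEq hcenter).trans
    (QuotientGroup.quotientKerEquivOfSurjective p hsurj)
  exact ⟨IsPerfect.commutator_eq_top, e.isSimpleGroup, not_isMulCommutative_iff_exists.1 <|
    not_isMulCommutative_of_surjective (f := e.toMonoidHom) e.surjective hK⟩

lemma commutatorElement_mul_center_left (a b : G) {z : G} (hz : z ∈ center G) :
    ⁅a * z, b⁆ = ⁅a, b⁆ := by
  have hzb : ⁅z, b⁆ = 1 := commutatorElement_eq_one_iff_mul_comm.2 (mem_center_iff.1 hz b).symm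
  simp [commutatorElement_mul_left_eq_conj_mul, hzb]

lemma commutatorElement_mul_center_right (a b : G) {z : G} (hz : z ∈ center G) :
    ⁅a, b * z⁆ = ⁅a, b⁆ := by
  rw [← commutatorElement_inv, commutatorElement_mul_center_left b a hz, commutatorElement_inv]

lemma commutatorElement_eq_of_map_eq (hker : p.ker ≤ center G) {a a' b b' : G}
    (ha : p a = p a') (hb : p b = p b') : ⁅a, b⁆ = ⁅a', b'⁆ := by
  have hz : a'⁻¹ * a ∈ center G := hker (by simp [MonoidHom.mem_ker, ha])
  have hw : b'⁻¹ * b ∈ center G := hker (by simp [MonoidHom.mem_ker, hb])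
  calc ⁅a, b⁆ = ⁅a' * (a'⁻¹ * a), b' * (b'⁻¹ * b)⁆ := by simp only [mul_inv_cancel_left]
    _ = ⁅a', b' * (b'⁻¹ * b)⁆ := commutatorElement_mul_center_left _ _ hz
    _ = ⁅a', b'⁆ := commutatorElement_mul_center_right _ _ hw

lemma commutator_le_commutator_of_map_le (hker : p.ker ≤ center G) {A A' B B' : Subgroup G}
    (hA : A.map p ≤ A'.map p) (hB : B.map p ≤ B'.map p) : ⁅A, B⁆ ≤ ⁅A', B'⁆ := by
  rw [commutator_le]
  intro a ha b hb
  obtain ⟨a', ha', haa'⟩ := hA (mem_map_of_mem p ha)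
  obtain ⟨b', hb', hbb'⟩ := hB (mem_map_of_mem p hb)
  rw [← commutatorElement_eq_of_map_eq hker haa' hbb']
  exact commutator_mem_commutator ha' hb'

lemma commutator_commutator_self_eq_bot (hker : p.ker ≤ center G) {A B : Subgroup G}
    (hAB : ⁅A.map p, B.map p⁆ = ⊥) : ⁅⁅A, A⁆, B⁆ = ⊥ := by
  have hcentral : ⁅A, B⁆ ≤ center G := by
    rw [← map_commutator, Subgroup.map_eq_bot_iff] at hAB
    exact hAB.trans hker
  have hABA : ⁅⁅A, B⁆, A⁆ = ⊥ :=
    commutator_eq_bot_iff_le_centralizer.2 (hcentral.trans (center_le_centralizer _))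
  exact commutator_commutator_eq_bot_of_rotate hABA (commutator_comm A B ▸ hABA)

/-- The commutator subgroup of the preimage of `H` under `p`. When `p` is a surjection with central
kernel and `H` is perfect, it is the unique perfect subgroup with image `H`. -/
def perfectLift (p : G →* K) (H : Subgroup K) : Subgroup G :=
  ⁅H.comap p, H.comap p⁆

lemma map_perfectLift (hsurj : Function.Surjective p) (H : Subgroup K) [IsPerfect H] :
    (perfectLift p H).map p = H := by
  rw [perfectLift, map_commutator, map_comap_eq_self_of_surjective hsurj, commutator_eq_self]

lemma isPerfect_perfectLift (hsurj : Function.Surjective p) (hker : p.ker ≤ center G)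
    (H : Subgroup K) [IsPerfect H] : IsPerfect (perfectLift p H) := by
  have hmap : (H.comap p).map p ≤ (perfectLift p H).map p := by
    rw [map_perfectLift hsurj]
    exact map_comap_le p H
  exact Subgroup.isPerfect_iff.2 <| (commutator_le_self _).antisymm <|
    commutator_le_commutator_of_map_le hker hmap hmap

lemma commutator_perfectLift_eq_bot (hker : p.ker ≤ center G) {H₁ H₂ : Subgroup K}
    (h : ⁅H₁, H₂⁆ = ⊥) : ⁅perfectLift p H₁, perfectLift p H₂⁆ = ⊥ := by
  have hmap : ⁅(H₁.comap p).map p, (H₂.comap p).map p⁆ = ⊥ :=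
    eq_bot_mono (commutator_mono (map_comap_le p H₁) (map_comap_le p H₂)) h
  exact eq_bot_mono (commutator_mono le_rfl (commutator_le_self _))
    (commutator_commutator_self_eq_bot hker hmap)

lemma iSup_perfectLift_eq_top [IsPerfect G] (hsurj : Function.Surjective p)
    (hker : p.ker ≤ center G) {ι : Type*} {H : ι → Subgroup K} [∀ i, IsPerfect (H i)]
    (hH : ⨆ i, H i = ⊤) : ⨆ i, perfectLift p (H i) = ⊤ := by
  have hmap : (⊤ : Subgroup G).map p ≤ (⨆ i, perfectLift p (H i)).map p := by
    simp only [Subgroup.map_iSup, map_perfectLift hsurj, hH, le_top]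
  rw [eq_top_iff, ← IsPerfect.commutator_eq_top (G := G)]
  exact (commutator_le_commutator_of_map_le hker hmap hmap).trans (commutator_le_self _)

lemma isQuasisimple_perfectLift (hsurj : Function.Surjective p) (hker : p.ker ≤ center G)
    {H : Subgroup K} [IsSimpleGroup H] (hH : ¬IsMulCommutative H) :
    IsQuasisimple (perfectLift p H) := by
  have := isPerfect_of_isSimpleGroup hH
  have := isPerfect_perfectLift hsurj hker H
  have hmap := map_perfectLift hsurj H
  have : IsSimpleGroup ((perfectLift p H).map p) := by rwa [hmap]
  refine isQuasisimple_of_surjective (by rwa [hmap]) (p.subgroupMap_surjective (perfectLift p H)) ?_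
  intro s hs
  have hs' : (s : G) ∈ center G := hker (congrArg Subtype.val hs)
  exact mem_center_iff.2 fun t => Subtype.ext (mem_center_iff.1 hs' t)

end CentralExtension

section Pi

lemma finite_of_finite_pi {ι : Type*} {T : ι → Type*} [∀ i, Nontrivial (T i)]
    [Finite (∀ i, T i)] : Finite ι := by
  by_contra h
  have := not_finite_iff_infinite.1 h
  exact not_finite (∀ i, T i)

variable {ι : Type*} [DecidableEq ι] {T : ι → Type*} [∀ i, Group (T i)]

lemma iSup_range_mulSingle [Finite ι] : ⨆ i, (MonoidHom.mulSingle T i).range = ⊤ :=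
  eq_top_iff.2 fun f _ => pi_mem_of_mulSingle_mem f fun i => mem_iSup_of_mem i ⟨f i, rfl⟩

lemma commutator_range_mulSingle {i j : ι} (hij : i ≠ j) :
    ⁅(MonoidHom.mulSingle T i).range, (MonoidHom.mulSingle T j).range⁆ = ⊥ := by
  rw [eq_bot_iff, commutator_le]
  rintro _ ⟨s, rfl⟩ _ ⟨t, rfl⟩
  exact (Pi.mulSingle_commute hij s t).commutator_eq

end Pi

theorem quasisemisimple_commutator_width_general {D : ℕ} {Q : Type*} [Group Q] [IsPerfect Q]
    {ι : Type*} [Finite ι] {T : ι → Type*} [∀ i, Group (T i)] [∀ i, IsSimpleGroup (T i)]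
    (hT : ∀ i, ¬IsMulCommutative (T i)) (e : Q ⧸ center Q ≃* ∀ i, T i)
    (hD : ∀ S : Subgroup Q, IsQuasisimple S → HasCommutatorWidthLE S D) :
    HasCommutatorWidthLE Q D := by
  classical
  let p : Q →* ∀ i, T i := e.toMonoidHom.comp (QuotientGroup.mk' (center Q))
  have hsurj : Function.Surjective p := e.surjective.comp (QuotientGroup.mk'_surjective _)
  have hker : p.ker ≤ center Q := by intro q hq; simpa [p, MonoidHom.mem_ker] using hq
  let factor (i : ι) : T i ≃* (MonoidHom.mulSingle T i).range :=
    MonoidHom.ofInjective (Pi.mulSingle_injective i)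
  have (i : ι) : IsSimpleGroup (MonoidHom.mulSingle T i).range := (factor i).symm.isSimpleGroup
  have hfactor (i : ι) : ¬IsMulCommutative (MonoidHom.mulSingle T i).range :=
    not_isMulCommutative_of_surjective (f := (factor i).symm.toMonoidHom) (factor i).symm.surjective
      (hT i)
  have (i : ι) : IsPerfect (MonoidHom.mulSingle T i).range :=
    isPerfect_of_isSimpleGroup (hfactor i)
  exact .of_iSup_eq_top (S := fun i => perfectLift p (MonoidHom.mulSingle T i).range)
    (fun _ _ hij => commutator_perfectLift_eq_bot hker (commutator_range_mulSingle hij))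
    (iSup_perfectLift_eq_top hsurj hker iSup_range_mulSingle)
    fun i => hD _ (isQuasisimple_perfectLift hsurj hker (hfactor i))

/-- **Lemma 3.1.** If `D` is such that every finite quasisimple group is the set of
products of `D` commutators, then every finite quasi-semisimple group `Q` satisfies
`Q = c(Q,Q)^{*D}`: every element of `Q` is a product of `D` commutators. -/
theorem quasisemisimple_commutator_width (D : ℕ)
    (hD : ∀ (S : Type) [Group S] [Finite S], IsQuasisimple S →
      ∀ s : S, ∃ x y : Fin D → S,
        (List.ofFn fun i => (x i)⁻¹ * (y i)⁻¹ * x i * y i).prod = s)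
    (Q : Type) [Group Q] [Finite Q] (hQ : IsQuasiSemisimple Q) :
    ∀ g : Q, ∃ x y : Fin D → Q,
      (List.ofFn fun i => (x i)⁻¹ * (y i)⁻¹ * x i * y i).prod = g := by
  obtain ⟨hperf, ι, T, _, hT, ⟨e⟩⟩ := hQ
  have : IsPerfect Q := ⟨hperf⟩
  have (i : ι) : IsSimpleGroup (T i) := (hT i).1
  have : Finite (∀ i, T i) := .of_equiv _ e.toEquiv
  have : Finite ι := finite_of_finite_pi (T := T)
  exact quasisemisimple_commutator_width_general
    (fun i => not_isMulCommutative_iff_exists.2 (hT i).2) e fun S => hD S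
end

section
/- Let G be a finite group, N a normal subgroup of G, M a subgroup of G, y ∈ G, and set D = M ∩ N and v(M;y) = |{a ∈ N : y^a ∈ M}|. If there exists b ∈ N with y^b ∈ M, then for every such b, v(M;y) = |C_N(y)| · |[y^b,N] ∩ D|, where [y^b,N] = {[y^b,n] : n ∈ N} and C_N(y) = {n ∈ N : [n,y]=1}. If no conjugate y^a with a ∈ N lies in M, then v(M;y) = 0. -/
/-!
An element `a ∈ N` is determined up to left multiplication by `C_N(y)` by the conjugate `y^a`, so
each point of `y^N ∩ M` is hit by `|C_N(y)|` elements of `N`. If `z = y^b` lies in `M`, then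
`[z, n] = z⁻¹ z^n`, so left translation by `z⁻¹ ∈ M` carries `y^N ∩ M = z^N ∩ M` onto `[z, N] ∩ M`,
and `[z, N] ⊆ N` because `z` normalizes `N`.
-/

open Cardinal Subgroup
open scoped Pointwise

section Fibers

variable {α β : Type*} [Group α] {f : α → β} {C : Subgroup α}

/-- If the fibers of `f` are the right cosets of the subgroup `C`, then the fiber through `b` is
identified with `C` by `a ↦ a * b⁻¹`. -/
def fiberEquivOfRightCosets (hf : ∀ a b, f a = f b ↔ a * b⁻¹ ∈ C) (b : α) :
    {a // f a = f b} ≃ C :=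
  (Equiv.mulRight b⁻¹).subtypeEquiv fun a => hf a b

/-- If the fibers of `f` are the right cosets of the subgroup `C`, then the preimage of `s` is a
union of copies of `C` indexed by the values of `f` in `s`. The bijection depends on the choice of
a representative of each coset. -/
noncomputable def preimageEquivOfRightCosets (hf : ∀ a b, f a = f b ↔ a * b⁻¹ ∈ C) (s : Set β) :
    f ⁻¹' s ≃ ↥(Set.range f ∩ s) × C :=
  (Equiv.sigmaSubtypeFiberEquivSubtype f (q := (· ∈ Set.range f ∩ s)) fun a =>
    (and_iff_right (Set.mem_range_self a)).symm).symm.trans <|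
    Equiv.sigmaEquivProdOfEquiv fun x =>
      (Equiv.subtypeEquivRight fun a => by rw [x.2.1.choose_spec]).trans
        (fiberEquivOfRightCosets hf x.2.1.choose)

end Fibers

section Conjugates

variable {G : Type*} [Group G] {N M : Subgroup G} {y z a b : G}

theorem conj_eq_conj_iff_mul_inv_mem_centralizer :
    a⁻¹ * y * a = b⁻¹ * y * b ↔ a * b⁻¹ ∈ centralizer {y} := by
  rw [mem_centralizer_singleton_iff, mul_assoc a⁻¹, inv_mul_eq_iff_eq_mul, ← mul_assoc,
    ← mul_assoc, ← mul_inv_eq_iff_eq_mul, mul_assoc y, eq_comm]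

variable (N y) in
/-- The set `y^N` of conjugates of `y` by elements of `N`. -/
def conjugatesBy : Set G :=
  Set.range fun n : N => (n : G)⁻¹ * y * n

variable (N z) in
/-- The set `[z, N]` of commutators `[z, n] = z⁻¹ n⁻¹ z n` with `n ∈ N`; it is not the subgroup
generated by them. -/
def commutatorsWith : Set G :=
  {x | ∃ n ∈ N, z⁻¹ * n⁻¹ * z * n = x}

theorem conjugatesBy_conj (hb : b ∈ N) : conjugatesBy N (b⁻¹ * y * b) = conjugatesBy N y :=
  calc
    conjugatesBy N (b⁻¹ * y * b) =
        Set.range ((fun n : N => (n : G)⁻¹ * y * n) ∘ Equiv.mulLeft ⟨b, hb⟩) := by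
      simp [conjugatesBy, Function.comp_def, mul_assoc]
    _ = conjugatesBy N y := (Equiv.surjective _).range_comp _

theorem commutatorsWith_eq_smul_conjugatesBy :
    commutatorsWith N z = z⁻¹ • conjugatesBy N z := by
  ext x
  simp [commutatorsWith, conjugatesBy, Set.mem_smul_set, mul_assoc]

theorem commutatorsWith_subset (hz : z ∈ normalizer (N : Set G)) : commutatorsWith N z ⊆ N := by
  rintro _ ⟨n, hn, rfl⟩
  exact N.mul_mem ((mem_normalizer_iff''.1 hz _).1 (N.inv_mem hn)) hn

theorem commutatorsWith_inter (hz : z ∈ normalizer (N : Set G)) (hzM : z ∈ M) :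
    commutatorsWith N z ∩ (M ∩ N) = z⁻¹ • (conjugatesBy N z ∩ M) := by
  rw [Set.smul_set_inter, ← commutatorsWith_eq_smul_conjugatesBy, smul_coe_set (M.inv_mem hzM),
    Set.inter_comm (M : Set G), ← Set.inter_assoc,
    Set.inter_eq_left.2 (commutatorsWith_subset hz)]

theorem mk_conj_mem_eq_mul (N : Subgroup G) (y : G) (s : Set G) :
    #{a // a ∈ N ∧ a⁻¹ * y * a ∈ s} =
      #{n // n ∈ N ∧ y * n = n * y} * #↥(conjugatesBy N y ∩ s) := by
  let C := (centralizer {y}).subgroupOf N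
  have mk_C : #C = #{n // n ∈ N ∧ y * n = n * y} :=
    mk_congr <| (Equiv.subtypeSubtypeEquivSubtypeInter (· ∈ N) (· ∈ centralizer {y})).trans <|
      Equiv.subtypeEquivRight fun n => by rw [mem_centralizer_singleton_iff, eq_comm]
  calc
    #{a // a ∈ N ∧ a⁻¹ * y * a ∈ s} = #((fun a : N => (a : G)⁻¹ * y * a) ⁻¹' s) :=
      (mk_congr (Equiv.subtypeSubtypeEquivSubtypeInter (· ∈ N) fun a => a⁻¹ * y * a ∈ s)).symm
    _ = #(↥(conjugatesBy N y ∩ s) × C) :=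
      mk_congr (preimageEquivOfRightCosets (C := C)
        (fun _ _ => conj_eq_conj_iff_mul_inv_mem_centralizer) s)
    _ = #{n // n ∈ N ∧ y * n = n * y} * #↥(conjugatesBy N y ∩ s) := by
      rw [← mul_def, mk_C, mul_comm]

end Conjugates

/-- The counts are cardinals because `Nat.card` is `0` on every infinite type. -/
theorem conjugates_in_subgroup_count_general {G : Type*} [Group G] (N M : Subgroup G) {y : G}
    (hy : y ∈ normalizer (N : Set G)) :
    (∀ b ∈ N, b⁻¹ * y * b ∈ M →
      #{a : G // a ∈ N ∧ a⁻¹ * y * a ∈ M} =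
        #{n : G // n ∈ N ∧ y * n = n * y} *
          #{x : G //
            (∃ n ∈ N, (b⁻¹ * y * b)⁻¹ * n⁻¹ * (b⁻¹ * y * b) * n = x) ∧
              x ∈ M ∧ x ∈ N}) ∧
    ((¬ ∃ b ∈ N, b⁻¹ * y * b ∈ M) →
      #{a : G // a ∈ N ∧ a⁻¹ * y * a ∈ M} = 0) := by
  refine ⟨fun b hb hbM => ?_, fun h => mk_eq_zero_iff.2 ⟨fun a => h ⟨a, a.2⟩⟩⟩
  have hbN : b ∈ normalizer (N : Set G) := le_normalizer hb
  have hz : b⁻¹ * y * b ∈ normalizer (N : Set G) := mul_mem (mul_mem (inv_mem hbN) hy) hbN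
  calc
    #{a : G // a ∈ N ∧ a⁻¹ * y * a ∈ M} =
        #{n : G // n ∈ N ∧ y * n = n * y} * #↥(conjugatesBy N y ∩ M) :=
      mk_conj_mem_eq_mul N y M
    _ = #{n : G // n ∈ N ∧ y * n = n * y} *
        #↥(commutatorsWith N (b⁻¹ * y * b) ∩ (M ∩ N)) := by
      rw [commutatorsWith_inter hz hbM, mk_smul_set, conjugatesBy_conj hb]

/-- **Lemma 5.2.** Let `N ◁ G` be finite, `M ≤ G`, `y ∈ G`, `D = M ∩ N` and
`v(M;y) = |{a ∈ N : y^a ∈ M}|`. If `y^b ∈ M` for some `b ∈ N`, then for every such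
`b`, `v(M;y) = |C_N(y)| · |[y^b,N] ∩ D|`; and if no `N`-conjugate of `y` lies in
`M`, then `v(M;y) = 0`. -/
theorem conjugates_in_subgroup_count {G : Type*} [Group G] [Finite G]
    (N M : Subgroup G) (hN : N.Normal) (y : G) :
    (∀ b ∈ N, b⁻¹ * y * b ∈ M →
      Nat.card {a : G // a ∈ N ∧ a⁻¹ * y * a ∈ M} =
        Nat.card {n : G // n ∈ N ∧ y * n = n * y} *
          Nat.card {x : G //
            (∃ n ∈ N, (b⁻¹ * y * b)⁻¹ * n⁻¹ * (b⁻¹ * y * b) * n = x) ∧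
              x ∈ M ∧ x ∈ N}) ∧
    ((¬ ∃ b ∈ N, b⁻¹ * y * b ∈ M) →
      Nat.card {a : G // a ∈ N ∧ a⁻¹ * y * a ∈ M} = 0) := by
  have h := conjugates_in_subgroup_count_general N M (y := y) (N.normalizer_eq_top ▸ mem_top y)
  exact ⟨fun b hb hbM => by simpa [Nat.card] using congrArg Cardinal.toNat (h.1 b hb hbM),
    fun hM => by simp only [Nat.card, h.2 hM, map_zero]⟩
end

section
/- Let V = A_1 × ⋯ × A_t with t ≥ 2, where the A_i are isomorphic finite groups, and let g be an automorphism of V that permutes the direct factors A_1, …, A_t and moves at least εt of them, where ε > 0. Let U = B_1 × ⋯ × B_t where B_i < A_i and |B_i| = |B_1| for each i, and suppose U^g = U. Then |C_V(g)| · |[g,V] ∩ U| ≤ |V| · |V:U|^{-ε/2}, where C_V(g) = {v ∈ V : v^g = v}, [g,V] = {(v^g)^{-1}v : v ∈ V}, and |V:U| is the index of U in V. -/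
/-- The `i`-th direct factor `A_i` of `V = A₁ × ⋯ × A_t`, as a subgroup of the
product: elements supported only at coordinate `i`. -/
def factorSubgroup {t : ℕ} (A : Fin t → Type*) [∀ i, Group (A i)] (i : Fin t) :
    Subgroup (∀ j, A j) :=
  Subgroup.pi Set.univ fun j => if j = i then (⊤ : Subgroup (A j)) else ⊥

/-!
An element `c` of `C_V(g)` satisfies `[g, cv] = [g, v]`, so `|C_V(g)| · |[g,V] ∩ U|` is the number
of `v ∈ V` with `[g, v] ∈ U`, that is, `|U|` times the number of cosets in `V/U = ∏ A_i/B_i` fixed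
by `g`. If `g` maps `A_i` onto `A_{σ i}`, the `σ i`-th coordinate of a fixed coset determines its
`i`-th coordinate. Order the indices linearly: by induction along the order, the coordinates with
`σ i < i` are determined by the remaining ones, and likewise those with `σ i > i`. Multiplying the
two resulting bounds accounts for every moved factor once, at the price of squaring the left side;
this is the origin of the `1/2` in the exponent.
-/

section Combinatorics

variable {ι : Type*} [Fintype ι] {X : ι → Type*} [∀ i, Finite (X i)] {P : Set (∀ i, X i)}
  {σ : ι → ι}

theorem card_mul_prod_card_le_of_wellFounded
    (hP : ∀ x ∈ P, ∀ y ∈ P, ∀ i, x (σ i) = y (σ i) → x i = y i)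
    {r : ι → ι → Prop} [DecidableRel r] (hr : WellFounded r) :
    Nat.card P * ∏ i with r (σ i) i, Nat.card (X i) ≤ Nat.card (∀ i, X i) := by
  have restrict_injective :
      Function.Injective fun (x : P) (i : {i // ¬ r (σ i) i}) ↦ x.1 i := by
    rintro ⟨x, hx⟩ ⟨y, hy⟩ hxy
    refine Subtype.ext (funext fun i ↦ ?_)
    induction i using hr.induction with
    | _ i ih =>
      by_cases hi : r (σ i) i
      · exact hP x hx y hy i (ih (σ i) hi)
      · exact congrFun hxy ⟨i, hi⟩
  have card_le : Nat.card P ≤ ∏ i with ¬ r (σ i) i, Nat.card (X i) := by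
    rw [← Finset.prod_subtype_eq_prod_filter, Finset.subtype_univ, ← Nat.card_pi]
    exact Nat.card_le_card_of_injective _ restrict_injective
  calc Nat.card P * ∏ i with r (σ i) i, Nat.card (X i)
      ≤ (∏ i with ¬ r (σ i) i, Nat.card (X i)) * ∏ i with r (σ i) i, Nat.card (X i) := by gcongr
    _ = Nat.card (∀ i, X i) := by
      rw [mul_comm, Finset.prod_filter_mul_prod_filter_not, Nat.card_pi]

theorem card_sq_mul_prod_card_le [DecidableEq ι]
    (hP : ∀ x ∈ P, ∀ y ∈ P, ∀ i, x (σ i) = y (σ i) → x i = y i) :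
    Nat.card P ^ 2 * ∏ i with σ i ≠ i, Nat.card (X i) ≤ Nat.card (∀ i, X i) ^ 2 := by
  let e := Fintype.equivFin ι
  have prod_ne : ∏ i with σ i ≠ i, Nat.card (X i) =
      (∏ i with e (σ i) < e i, Nat.card (X i)) * ∏ i with e (σ i) > e i, Nat.card (X i) := by
    rw [← Finset.prod_union (Finset.disjoint_filter.2 fun _ _ h ↦ h.not_gt), ← Finset.filter_or]
    simp only [gt_iff_lt, ← ne_iff_lt_or_gt, e.injective.ne_iff]
  have descents := card_mul_prod_card_le_of_wellFounded hP (r := fun i j ↦ e i < e j)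
    (InvImage.wf e wellFounded_lt)
  have ascents := card_mul_prod_card_le_of_wellFounded hP (r := fun i j ↦ e i > e j)
    (InvImage.wf e wellFounded_gt)
  rw [prod_ne, sq, sq, mul_mul_mul_comm]
  exact Nat.mul_le_mul descents ascents

end Combinatorics

section Group

variable {G : Type*} [Group G]

theorem card_le_card_image_mul_card_subgroup [Finite G] {X : Type*} (H : Subgroup G) (W : Set G)
    (f : G → X) (hf : ∀ v w, f v = f w → v⁻¹ * w ∈ H) :
    Nat.card W ≤ Nat.card (f '' W) * Nat.card H := by
  choose rep _ hrep using fun y : f '' W ↦ y.2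
  let toImage (v : W) : f '' W := ⟨f v, Set.mem_image_of_mem f v.2⟩
  rw [← Nat.card_prod]
  refine Nat.card_le_card_of_injective
    (fun v ↦ (toImage v, ⟨(rep (toImage v))⁻¹ * v, hf _ _ (hrep (toImage v))⟩)) fun v w h ↦ ?_
  obtain ⟨image_eq, quot_eq⟩ := Prod.mk.inj h
  have inv_rep_mul_eq := Subtype.mk.inj quot_eq
  rw [image_eq] at inv_rep_mul_eq
  exact Subtype.ext (mul_left_cancel inv_rep_mul_eq)

theorem inv_apply_mul_eq_iff (g : G →* G) (v w : G) :
    (g v)⁻¹ * v = (g w)⁻¹ * w ↔ g (v * w⁻¹) = v * w⁻¹ := by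
  rw [inv_mul_eq_iff_eq_mul, ← mul_assoc, ← mul_inv_eq_iff_eq_mul, map_mul, map_inv, eq_comm]

theorem card_fixed_mul_card_commutators_inter (g : G →* G) (S : Set G) :
    Nat.card {v // g v = v} * Nat.card {x // (∃ v, (g v)⁻¹ * v = x) ∧ x ∈ S} =
      Nat.card {v // (g v)⁻¹ * v ∈ S} := by
  choose rep hrep using fun x : {x // (∃ v, (g v)⁻¹ * v = x) ∧ x ∈ S} ↦ x.2.1
  have commutator_mul_rep (c : {v // g v = v}) (x) : (g (c * rep x))⁻¹ * (c * rep x) = x := by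
    rw [← hrep x, inv_apply_mul_eq_iff, mul_inv_cancel_right, c.2]
  let mulRep (p : {v // g v = v} × {x // (∃ v, (g v)⁻¹ * v = x) ∧ x ∈ S}) :
      {v // (g v)⁻¹ * v ∈ S} :=
    ⟨p.1 * rep p.2, by rw [commutator_mul_rep]; exact p.2.2.2⟩
  rw [← Nat.card_prod]
  refine Nat.card_congr (Equiv.ofBijective mulRep ⟨?_, fun ⟨v, hv⟩ ↦ ?_⟩)
  · rintro ⟨c, x⟩ ⟨d, y⟩ h
    have mul_eq : (c : G) * rep x = d * rep y := Subtype.mk.inj h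
    obtain rfl : x = y := Subtype.ext <| by
      rw [← commutator_mul_rep c x, mul_eq, commutator_mul_rep d y]
    exact Prod.ext (Subtype.ext (mul_right_cancel mul_eq)) rfl
  · let x : {x // (∃ v, (g v)⁻¹ * v = x) ∧ x ∈ S} := ⟨(g v)⁻¹ * v, ⟨v, rfl⟩, hv⟩
    have fixed : g (v * (rep x)⁻¹) = v * (rep x)⁻¹ := (inv_apply_mul_eq_iff g _ _).1 (hrep x).symm
    exact ⟨(⟨_, fixed⟩, x), Subtype.ext (inv_mul_cancel_right v (rep x))⟩

-- `Subgroup.index_pi` is stated only for a power of a single group.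
theorem index_subgroup_pi {ι : Type*} [Fintype ι] {A : ι → Type*} [∀ i, Group (A i)]
    (B : ∀ i, Subgroup (A i)) :
    (Subgroup.pi Set.univ B).index = ∏ i, (B i).index := by
  simp_rw [Subgroup.index, ← Nat.card_pi]
  refine Nat.card_congr
    ((Quotient.congrRight fun x y ↦ ?_).trans (Setoid.piQuotientEquiv _).symm)
  rw [QuotientGroup.leftRel_pi]

theorem index_eq_of_mulEquiv_of_card_eq {H : Type*} [Group H] [Finite G] (e : G ≃* H)
    {K : Subgroup G} {L : Subgroup H} (hKL : Nat.card K = Nat.card L) : K.index = L.index := by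
  refine Nat.eq_of_mul_eq_mul_left (Nat.card_pos (α := K)) ?_
  rw [K.card_mul_index, hKL, L.card_mul_index, Nat.card_congr e.toEquiv]

end Group

section FactorPermutation

variable {ι : Type*} [DecidableEq ι] {A : ι → Type*} [∀ i, Group (A i)]
  {g : (∀ i, A i) ≃* (∀ i, A i)} {σ : ι → ι}

theorem apply_mulSingle_eq_one_of_ne {i j : ι}
    (hij : (MonoidHom.mulSingle A i).range.map g.toMonoidHom = (MonoidHom.mulSingle A j).range)
    (a : A i) {k : ι} (hk : k ≠ j) : g (Pi.mulSingle i a) k = 1 := by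
  obtain ⟨b, hb⟩ : g (Pi.mulSingle i a) ∈ (MonoidHom.mulSingle A j).range :=
    hij ▸ Subgroup.mem_map_of_mem g.toMonoidHom ⟨a, rfl⟩
  rw [← hb, MonoidHom.mulSingle_apply, Pi.mulSingle_eq_of_ne hk]

theorem eq_one_of_mulSingle_mem_range {i k : ι} (hik : k ≠ i) {a : A k}
    (ha : Pi.mulSingle k a ∈ (MonoidHom.mulSingle A i).range) : a = 1 := by
  obtain ⟨b, hb⟩ := ha
  rw [← Pi.mulSingle_eq_same k a, ← hb, MonoidHom.mulSingle_apply, Pi.mulSingle_eq_of_ne hik]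

variable (hσ : ∀ i, (MonoidHom.mulSingle A i).range.map g.toMonoidHom =
  (MonoidHom.mulSingle A (σ i)).range)
include hσ

theorem apply_mulSingle_apply_eq_one {i k : ι} (hik : k ≠ i) (a : A k) :
    g (Pi.mulSingle k a) (σ i) = 1 := by
  -- `σ` can identify distinct indices, but only those of trivial factors.
  by_cases hki : σ i = σ k
  · have range_eq : (MonoidHom.mulSingle A i).range = (MonoidHom.mulSingle A k).range :=
      Subgroup.map_injective (f := g.toMonoidHom) g.injective (by rw [hσ, hσ, hki])
    have ha : a = 1 := eq_one_of_mulSingle_mem_range hik (range_eq ▸ ⟨a, rfl⟩)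
    rw [ha, Pi.mulSingle_one, map_one, Pi.one_apply]
  · exact apply_mulSingle_eq_one_of_ne (hσ k) a hki

theorem apply_eq_apply_mulSingle [Finite ι] (u : ∀ i, A i) (i : ι) :
    g u (σ i) = g (Pi.mulSingle i (u i)) (σ i) := by
  let coord : (∀ i, A i) →* A (σ i) := (Pi.evalMonoidHom A (σ i)).comp g.toMonoidHom
  have coord_eq : coord =
      coord.comp ((MonoidHom.mulSingle A i).comp (Pi.evalMonoidHom A i)) := by
    refine MonoidHom.pi_ext fun k a ↦ ?_
    obtain rfl | hik := eq_or_ne k i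
    · simp
    · simp [coord, apply_mulSingle_apply_eq_one hσ hik, Pi.mulSingle_eq_of_ne hik.symm]
  exact DFunLike.congr_fun coord_eq u

variable {B : ∀ i, Subgroup (A i)}
  (hU : (Subgroup.pi Set.univ B).map g.toMonoidHom = Subgroup.pi Set.univ B)
include hU

theorem mem_of_apply_mem [Finite ι] {u : ∀ i, A i} {i : ι} (hu : g u (σ i) ∈ B (σ i)) :
    u i ∈ B i := by
  have single_mem : g (Pi.mulSingle i (u i)) ∈ Subgroup.pi Set.univ B := by
    intro j _
    obtain rfl | hj := eq_or_ne j (σ i)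
    · rwa [← apply_eq_apply_mulSingle hσ]
    · rw [apply_mulSingle_eq_one_of_ne (hσ i) _ hj]
      exact (B j).one_mem
  rw [← hU] at single_mem
  simpa using (Subgroup.mem_map_iff_mem (f := g.toMonoidHom) g.injective).1 single_mem i trivial

theorem mk_eq_mk_of_commutator_mem [Finite ι] {v w : ∀ i, A i}
    (hv : (g v)⁻¹ * v ∈ Subgroup.pi Set.univ B) (hw : (g w)⁻¹ * w ∈ Subgroup.pi Set.univ B)
    {i : ι} (h : (v (σ i) : A (σ i) ⧸ B (σ i)) = w (σ i)) : (v i : A i ⧸ B i) = w i := by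
  rw [QuotientGroup.eq] at h ⊢
  have apply_inv_mul : g (v⁻¹ * w) = (g v)⁻¹ * v * (v⁻¹ * w) * ((g w)⁻¹ * w)⁻¹ := by
    rw [map_mul, map_inv]
    group
  refine mem_of_apply_mem hσ hU (u := v⁻¹ * w) ?_
  rw [apply_inv_mul]
  exact mul_mem (mul_mem (hv _ trivial) h) (inv_mem (hw _ trivial))

theorem card_commutator_mem_sq_mul_prod_index_le [Fintype ι] [∀ i, Finite (A i)] :
    Nat.card {v // (g v)⁻¹ * v ∈ Subgroup.pi Set.univ B} ^ 2 * ∏ i with σ i ≠ i, (B i).index ≤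
      Nat.card (∀ i, A i) ^ 2 := by
  set U := Subgroup.pi Set.univ B
  let W : Set (∀ i, A i) := {v | (g v)⁻¹ * v ∈ U}
  let cosets (v : ∀ i, A i) (i : ι) : A i ⧸ B i := v i
  have card_W : Nat.card W ≤ Nat.card (cosets '' W) * Nat.card U :=
    card_le_card_image_mul_card_subgroup U W cosets fun v w h i _ ↦
      QuotientGroup.eq.1 (congrFun h i)
  have card_cosets : Nat.card (cosets '' W) ^ 2 * ∏ i with σ i ≠ i, (B i).index ≤ U.index ^ 2 := by
    rw [index_subgroup_pi]
    simp only [Subgroup.index, ← Nat.card_pi]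
    refine card_sq_mul_prod_card_le ?_
    rintro _ ⟨v, hv, rfl⟩ _ ⟨w, hw, rfl⟩ i h
    exact mk_eq_mk_of_commutator_mem hσ hU hv hw h
  calc Nat.card W ^ 2 * ∏ i with σ i ≠ i, (B i).index
      ≤ (Nat.card (cosets '' W) * Nat.card U) ^ 2 * ∏ i with σ i ≠ i, (B i).index := by gcongr
    _ = Nat.card U ^ 2 * (Nat.card (cosets '' W) ^ 2 * ∏ i with σ i ≠ i, (B i).index) := by ring
    _ ≤ Nat.card U ^ 2 * U.index ^ 2 := by gcongr
    _ = Nat.card (∀ i, A i) ^ 2 := by rw [← mul_pow, U.card_mul_index]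

end FactorPermutation

theorem rpow_prod_le_prod_of_const {ι : Type*} [Fintype ι] {f : ι → ℕ} (hpos : ∀ i, 1 ≤ f i)
    (hconst : ∀ i j, f i = f j) {ε : ℝ} {s : Finset ι} (hs : ε * Fintype.card ι ≤ s.card) :
    ((∏ i, f i : ℕ) : ℝ) ^ ε ≤ (∏ i ∈ s, f i : ℕ) := by
  obtain ⟨n, hn, hfn⟩ : ∃ n, 1 ≤ n ∧ ∀ i, f i = n := by
    cases isEmpty_or_nonempty ι with
    | inl _ => exact ⟨1, le_rfl, isEmptyElim⟩
    | inr h => exact ⟨f h.some, hpos _, fun i ↦ hconst i _⟩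
  have one_le_n : (1 : ℝ) ≤ n := mod_cast hn
  simp only [hfn, Finset.prod_const, Finset.card_univ, Nat.cast_pow]
  rw [← Real.rpow_natCast_mul (by positivity), mul_comm, ← Real.rpow_natCast]
  exact Real.rpow_le_rpow_of_exponent_le one_le_n hs

theorem le_mul_rpow_neg_half_of_sq_mul_rpow_le {x y a ε : ℝ} (hy : 0 ≤ y) (ha : 0 < a)
    (h : x ^ 2 * a ^ ε ≤ y ^ 2) : x ≤ y * a ^ (-(ε / 2)) := by
  rw [Real.rpow_neg ha.le, ← div_eq_mul_inv, le_div_iff₀ (Real.rpow_pos_of_pos ha _)]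
  refine (abs_le_of_sq_le_sq' ?_ hy).2
  rwa [mul_pow, ← Real.rpow_mul_natCast ha.le, Nat.cast_ofNat, div_mul_cancel₀ ε two_ne_zero]

theorem factorSubgroup_eq_range_mulSingle {t : ℕ} (A : Fin t → Type*) [∀ i, Group (A i)]
    (i : Fin t) : factorSubgroup A i = (MonoidHom.mulSingle A i).range := by
  ext v
  simp only [factorSubgroup, Subgroup.mem_pi, Set.mem_univ, forall_const, MonoidHom.mem_range,
    MonoidHom.mulSingle_apply]
  refine ⟨fun hv ↦ ⟨v i, funext fun j ↦ ?_⟩, ?_⟩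
  · obtain rfl | hj := eq_or_ne j i
    · rw [Pi.mulSingle_eq_same]
    · simpa [hj, eq_comm] using hv j
  · rintro ⟨a, rfl⟩ j
    obtain rfl | hj := eq_or_ne j i <;> simp [*]

theorem centralizer_commutator_bound_general {ι : Type*} [Fintype ι] [DecidableEq ι]
    {A : ι → Type*} [∀ i, Group (A i)] [∀ i, Finite (A i)] (g : (∀ i, A i) ≃* (∀ i, A i))
    (hperm : ∀ i, ∃ j, (MonoidHom.mulSingle A i).range.map g.toMonoidHom =
      (MonoidHom.mulSingle A j).range)
    {ε : ℝ}
    (hmoves : ε * Fintype.card ι ≤ Nat.card {i //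
      (MonoidHom.mulSingle A i).range.map g.toMonoidHom ≠ (MonoidHom.mulSingle A i).range})
    (B : ∀ i, Subgroup (A i)) (hindex : ∀ i j, (B i).index = (B j).index)
    (hU : (Subgroup.pi Set.univ B).map g.toMonoidHom = Subgroup.pi Set.univ B) :
    (Nat.card {v // g v = v} : ℝ) *
      Nat.card {x // (∃ v, (g v)⁻¹ * v = x) ∧ x ∈ Subgroup.pi Set.univ B} ≤
    Nat.card (∀ i, A i) * ((Subgroup.pi Set.univ B).index : ℝ) ^ (-(ε / 2)) := by
  choose σ hσ using hperm
  have moved_le : Nat.card {i // (MonoidHom.mulSingle A i).range.map g.toMonoidHom ≠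
      (MonoidHom.mulSingle A i).range} ≤ Finset.card {i | σ i ≠ i} := by
    rw [← Fintype.card_subtype, ← Nat.card_eq_fintype_card]
    refine Nat.card_mono (Set.toFinite {i | σ i ≠ i}) fun i hi hfix ↦ hi ?_
    rw [hσ, hfix]
  have index_rpow_le : ((Subgroup.pi Set.univ B).index : ℝ) ^ ε ≤
      (∏ i with σ i ≠ i, (B i).index : ℕ) := by
    rw [index_subgroup_pi]
    exact rpow_prod_le_prod_of_const (fun i ↦ (B i).index_ne_zero_of_finite.bot_lt) hindex
      (hmoves.trans (mod_cast moved_le))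
  have card_eq : Nat.card {v // g v = v} *
      Nat.card {x // (∃ v, (g v)⁻¹ * v = x) ∧ x ∈ Subgroup.pi Set.univ B} =
      Nat.card {v // (g v)⁻¹ * v ∈ Subgroup.pi Set.univ B} :=
    card_fixed_mul_card_commutators_inter g.toMonoidHom (Subgroup.pi Set.univ B)
  have index_pos : 0 < (Subgroup.pi Set.univ B).index :=
    Subgroup.index_ne_zero_of_finite.bot_lt
  refine le_mul_rpow_neg_half_of_sq_mul_rpow_le (by positivity) (mod_cast index_pos) ?_
  rw [← Nat.cast_mul, card_eq]
  refine (mul_le_mul_of_nonneg_left index_rpow_le (by positivity)).trans ?_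
  exact_mod_cast card_commutator_mem_sq_mul_prod_index_le hσ hU

/-- **Lemma 5.5(i).** Let `V = A₁ × ⋯ × A_t` (`t ≥ 2`, the `A_i` isomorphic finite
groups) and let `g` be an automorphism of `V` permuting the factors and moving at
least `εt` of them. If `U = B₁ × ⋯ × B_t` with `B_i < A_i`, `|B_i| = |B_j|`, and
`U^g = U`, then `|C_V(g)| · |[g,V] ∩ U| ≤ |V| · |V:U|^{-ε/2}`. -/
theorem centralizer_commutator_bound (t : ℕ) (ht : 2 ≤ t)
    (A : Fin t → Type) [∀ i, Group (A i)] [∀ i, Finite (A i)]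
    (hiso : ∀ i j, Nonempty (A i ≃* A j))
    (g : (∀ i, A i) ≃* (∀ i, A i))
    (hperm : ∀ i, ∃ j, (factorSubgroup A i).map g.toMonoidHom = factorSubgroup A j)
    (ε : ℝ) (hε : 0 < ε)
    (hmoves : ε * t ≤
      (Nat.card {i : Fin t // (factorSubgroup A i).map g.toMonoidHom ≠ factorSubgroup A i} : ℝ))
    (B : ∀ i, Subgroup (A i)) (hBlt : ∀ i, B i < ⊤)
    (hBcard : ∀ i j, Nat.card (B i) = Nat.card (B j))
    (hU : (Subgroup.pi Set.univ B).map g.toMonoidHom = Subgroup.pi Set.univ B) :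
    (Nat.card {v : ∀ i, A i // g v = v} : ℝ) *
      (Nat.card {x : ∀ i, A i //
        (∃ v : ∀ i, A i, (g v)⁻¹ * v = x) ∧ x ∈ Subgroup.pi Set.univ B} : ℝ) ≤
    (Nat.card (∀ i, A i) : ℝ) *
      ((Subgroup.pi Set.univ B : Subgroup (∀ i, A i)).index : ℝ) ^ (-(ε / 2)) := by
  simp only [factorSubgroup_eq_range_mulSingle] at hperm hmoves
  exact centralizer_commutator_bound_general g hperm (by simpa using hmoves) B
    (fun i j ↦ index_eq_of_mulEquiv_of_card_eq (hiso i j).some (hBcard i j)) hU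
end

section
/- Let D be a natural number such that for every finite quasisimple group S and any automorphisms α_1, β_1, …, α_D, β_D of S, every element of S is a product T_{α_1,β_1}(x_1,y_1)·…·T_{α_D,β_D}(x_D,y_D) for suitable x_i, y_i ∈ S. Then for every finite quasi-semisimple group N and any 2D automorphisms α_1, β_1, …, α_D, β_D of N, the map θ : N^{2D} → N defined by θ(a_1,…,a_D,b_1,…,b_D) = ∏_{j=1}^{D} T_{α_j,β_j}(a_j,b_j) is surjective. -/
/-- The twisted commutator `T_{α,β}(x,y) = x⁻¹y⁻¹x^α y^β`. -/
def twistedCommutator {S : Type*} [Group S] (α β : MulAut S) (x y : S) : S :=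
  x⁻¹ * y⁻¹ * α x * β y

/-!
A quasi-semisimple group `N` with finitely many components (normal quasisimple subgroups) is
generated by them, distinct components commute elementwise, and every automorphism of `N` permutes
them. Hence it suffices that the image of `θ` is stable under left multiplication by each
component `K`.

Let `c_j = T_{α_j,β_j}(a_j,b_j)`. As `x` and `y` vary, `T_{α_j,β_j}(x,y)` takes every value
`h_j⁻¹ T_{A,B}(X,Y) h_j c_j`, where `A`, `B` differ from `α_j`, `β_j` by inner automorphisms
depending on `a_j`, `b_j` and the freely chosen `h_j`. With `h_j = c_1 ⋯ c_{j-1}` the product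
telescopes to `∏ T_{A_j,B_j}(X_j,Y_j) · ∏ c_j`, so every element of `K` has to be written as
`∏ T_{A_j,B_j}(X_j,Y_j)`.

The automorphisms `A` and `B` may move `K`. Taking for `X` and `Y` products of translates of
`s, t ∈ K` along the orbits of `K` under `A` and `B`, all contributions outside `K` cancel and
`T_{A,B}(X,Y) = T_{A',B'}(s,t)` with `A'`, `B'` preserving `K`; the hypothesis on `K` applies.
-/

open scoped Pointwise commutatorElement

section TwistedCommutator

variable {N : Type*} [Group N]

theorem map_twistedCommutator (φ A B : MulAut N) (x y : N) :
    φ (twistedCommutator A B x y) =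
      twistedCommutator (φ * A * φ⁻¹) (φ * B * φ⁻¹) (φ x) (φ y) := by
  simp [twistedCommutator]

theorem twistedCommutator_shift (A B : MulAut N) (a b x y : N) :
    twistedCommutator A B (b⁻¹ * x * b * a) (y * b) =
      MulAut.conj (a⁻¹ * b⁻¹)
          (twistedCommutator (MulAut.conj (A b)⁻¹ * A) (MulAut.conj (A a) * B) x y) *
        twistedCommutator A B a b := by
  simp only [twistedCommutator, MulAut.mul_apply, MulAut.conj_apply, map_mul, map_inv,
    MulAut.conj_inv_apply]
  group

theorem exists_twistedCommutator_eq_conj_mul (A B : MulAut N) (a b h : N) :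
    ∃ A' B' : MulAut N, ∀ x' y' : N, ∃ x y : N,
      twistedCommutator A B x y =
        h⁻¹ * twistedCommutator A' B' x' y' * h * twistedCommutator A B a b := by
  set φ : MulAut N := MulAut.conj (h * (a⁻¹ * b⁻¹)) with hφ
  refine ⟨φ * (MulAut.conj (A b)⁻¹ * A) * φ⁻¹, φ * (MulAut.conj (A a) * B) * φ⁻¹,
    fun x' y' => ⟨b⁻¹ * φ⁻¹ x' * b * a, φ⁻¹ y' * b, ?_⟩⟩
  have hconj (g : N) : h⁻¹ * φ g * h = MulAut.conj (a⁻¹ * b⁻¹) g := by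
    simp [hφ, mul_assoc]
  rw [twistedCommutator_shift, ← hconj, map_twistedCommutator, MulAut.apply_inv_self,
    MulAut.apply_inv_self]

/-- The map `θ` of the paper: `((a_j), (b_j)) ↦ ∏ⱼ T_{αⱼ,βⱼ}(aⱼ,bⱼ)`. -/
def twistedCommutatorProd {D : ℕ} (α β : Fin D → MulAut N) (ab : (Fin D → N) × (Fin D → N)) : N :=
  (List.ofFn fun j => twistedCommutator (α j) (β j) (ab.1 j) (ab.2 j)).prod

theorem twistedCommutatorProd_one {D : ℕ} (α β : Fin D → MulAut N) :
    twistedCommutatorProd α β 1 = 1 := by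
  simp [twistedCommutatorProd, twistedCommutator, List.ofFn_const]

theorem prod_ofFn_telescope {D : ℕ} (c : Fin (D + 1) → N) (g : Fin D → N) :
    (List.ofFn fun j => (c j.castSucc)⁻¹ * g j * c j.succ).prod =
      (c 0)⁻¹ * (List.ofFn g).prod * c (Fin.last D) := by
  induction D with
  | zero => simp
  | succ D ih =>
    have htail := ih (fun j => c j.succ) fun j => g j.succ
    simp only [Fin.succ_castSucc, Fin.succ_last, Fin.succ_zero_eq_one] at htail
    simp only [List.ofFn_succ, List.prod_cons, Fin.castSucc_zero, Fin.succ_zero_eq_one, htail]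
    group

theorem prod_ofFn_partialProd_conj_mul {D : ℕ} (c g : Fin D → N) :
    (List.ofFn fun j =>
        (Fin.partialProd c j.castSucc)⁻¹ * g j * Fin.partialProd c j.castSucc * c j).prod =
      (List.ofFn g).prod * (List.ofFn c).prod := by
  have hlast : Fin.partialProd c (Fin.last D) = (List.ofFn c).prod := by
    simp [Fin.partialProd, List.take_of_length_le]
  simpa [Fin.partialProd_succ, mul_assoc, hlast] using prod_ofFn_telescope (Fin.partialProd c) g

end TwistedCommutator

section OrbitProd

variable {N : Type*} [Group N]

/-- The product `s · A(s) ⋯ Aⁿ⁻¹(s)` of the first `n` translates of `s` under `A`. -/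
def orbitProd (A : MulAut N) (s : N) (n : ℕ) : N :=
  ((List.range n).map fun i => (A ^ i) s).prod

theorem commute_orbitProd {A : MulAut N} {s z : N} {n : ℕ}
    (h : ∀ i < n, Commute z ((A ^ i) s)) : Commute z (orbitProd A s n) := by
  refine Commute.list_prod_right _ _ fun x hx => ?_
  obtain ⟨i, hi, rfl⟩ := List.mem_map.mp hx
  exact h i (List.mem_range.mp hi)

theorem orbitProd_succ (A : MulAut N) (s : N) (n : ℕ) :
    orbitProd A s (n + 1) = orbitProd A s n * (A ^ n) s :=
  List.prod_range_succ _ n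

theorem orbitProd_succ' (A : MulAut N) (s : N) (n : ℕ) :
    orbitProd A s (n + 1) = s * orbitProd A (A s) n := by
  simp [orbitProd, List.prod_range_succ', pow_succ]

theorem map_orbitProd (A : MulAut N) (s : N) (n : ℕ) :
    A (orbitProd A s n) = orbitProd A (A s) n := by
  simp only [orbitProd, map_list_prod, List.map_map, Function.comp_def, ← MulAut.mul_apply,
    ← pow_succ, ← pow_succ']

theorem map_orbitProd_eq_inv_mul (A : MulAut N) (s : N) (n : ℕ) :
    A (orbitProd A s n) = s⁻¹ * orbitProd A s n * (A ^ n) s := by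
  rw [mul_assoc, ← orbitProd_succ, orbitProd_succ', inv_mul_cancel_left, map_orbitProd]

theorem exists_orbitProd_eq_mul {A : MulAut N} {s : N} {n : ℕ} (hn : 0 < n) :
    ∃ r, orbitProd A s n = s * r ∧
      ∀ z, (∀ i, 0 < i → i < n → Commute z ((A ^ i) s)) → Commute z r := by
  obtain ⟨n, rfl⟩ := Nat.exists_eq_succ_of_ne_zero hn.ne'
  refine ⟨orbitProd A (A s) n, orbitProd_succ' A s n, fun z hz => commute_orbitProd fun i hi => ?_⟩
  rw [← MulAut.mul_apply, ← pow_succ]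
  exact hz (i + 1) i.succ_pos (by lia)

theorem twistedCommutator_orbitProd_right {A B : MulAut N} {x t : N} {k : ℕ} (hk : 0 < k)
    (ht : ∀ i, 0 < i → i < k → Commute t ((B ^ i) t))
    (hx : ∀ i, 0 < i → i < k → Commute (A x) ((B ^ i) t)) :
    twistedCommutator A B x (orbitProd B t k) = twistedCommutator A (B ^ k) x t := by
  obtain ⟨r, hr, hcomm⟩ := exists_orbitProd_eq_mul (A := B) (s := t) hk
  have hrt : Commute (t⁻¹ * A x) r := (hcomm t ht).inv_left.mul_left (hcomm _ hx)
  calc twistedCommutator A B x (orbitProd B t k)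
      = x⁻¹ * r⁻¹ * ((t⁻¹ * A x) * r) * (B ^ k) t := by
        rw [twistedCommutator, map_orbitProd_eq_inv_mul, hr]; group
    _ = twistedCommutator A (B ^ k) x t := by rw [hrt.eq, twistedCommutator]; group

theorem twistedCommutator_orbitProd_left {A C : MulAut N} {s t : N} {m : ℕ} (hm : 0 < m)
    (hs : ∀ i, 0 < i → i < m → Commute s ((A ^ i) s))
    (ht : ∀ i, 0 < i → i < m → Commute t ((A ^ i) s)) :
    twistedCommutator A C (orbitProd A s m) t = twistedCommutator (A ^ m) C s t := by
  obtain ⟨r, hr, hcomm⟩ := exists_orbitProd_eq_mul (A := A) (s := s) hm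
  have hrst : Commute (s⁻¹ * t⁻¹) r := (hcomm s hs).inv_left.mul_left (hcomm t ht).inv_left
  calc twistedCommutator A C (orbitProd A s m) t
      = r⁻¹ * ((s⁻¹ * t⁻¹) * r) * (A ^ m) s * C t := by
        rw [twistedCommutator, map_orbitProd_eq_inv_mul, hr]; group
    _ = twistedCommutator (A ^ m) C s t := by rw [hrst.eq, twistedCommutator]; group

theorem twistedCommutator_mul_orbitProd {A C : MulAut N} {x t : N} {n : ℕ}
    (hT : ∀ i < n, Commute (twistedCommutator A C x t) ((A ^ i) (C t)))
    (hC : ∀ i ≤ n, Commute (C t) ((A ^ i) (C t))) :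
    twistedCommutator A C (x * orbitProd A (C t) n) t = twistedCommutator A (A ^ n * C) x t := by
  set r := orbitProd A (C t) n
  have hAr : A r = (C t)⁻¹ * r * (A ^ n) (C t) := map_orbitProd_eq_inv_mul A (C t) n
  have hr : Commute (twistedCommutator A C x t * (C t)⁻¹ * (C t)⁻¹) r :=
    have hCr : Commute (C t) r := commute_orbitProd fun i hi => hC i hi.le
    ((commute_orbitProd hT).mul_left hCr.inv_left).mul_left hCr.inv_left
  calc twistedCommutator A C (x * r) t
      = r⁻¹ * ((twistedCommutator A C x t * (C t)⁻¹ * (C t)⁻¹) * r) *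
          ((A ^ n) (C t) * C t) := by
        rw [twistedCommutator, map_mul, hAr, twistedCommutator]; group
    _ = twistedCommutator A (A ^ n * C) x t := by
        rw [hr.eq, ← (hC n le_rfl).eq, twistedCommutator, twistedCommutator, MulAut.mul_apply]
        group

end OrbitProd

section CommutingTranslates

theorem exists_minimal_return {G X : Type*} [Group G] [MulAction G X] {a b : G} {x : X}
    (ha : 0 < MulAction.period a x) (hb : 0 < MulAction.period b x) :
    ∃ k n : ℕ, 0 < k ∧ a ^ n • b ^ k • x = x ∧ (∀ i < n, a ^ i • b ^ k • x ≠ x) ∧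
      ∀ i, 0 < i → i < k → ∀ z : ℤ, a ^ z • x ≠ b ^ i • x := by
  classical
  have hexists_k : ∃ k, 0 < k ∧ ∃ z : ℤ, a ^ z • x = b ^ k • x :=
    ⟨MulAction.period b x, hb, 0, by simp⟩
  obtain ⟨hk, z, hz⟩ := Nat.find_spec hexists_k
  have hexists_n : ∃ n : ℕ, a ^ n • b ^ Nat.find hexists_k • x = x := by
    have hperiod : (0 : ℤ) < MulAction.period a x := mod_cast ha
    refine ⟨(-z % MulAction.period a x).toNat, ?_⟩
    rw [← hz, ← zpow_natCast, Int.toNat_of_nonneg (Int.emod_nonneg _ hperiod.ne'), ← mul_smul,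
      ← zpow_add, MulAction.zpow_smul_eq_iff_period_dvd, Int.dvd_iff_emod_eq_zero]
    simp
  exact ⟨Nat.find hexists_k, Nat.find hexists_n, hk, Nat.find_spec hexists_n,
    fun _ => Nat.find_min hexists_n,
    fun _ hi₀ hi z hz => Nat.find_min hexists_k hi ⟨hi₀, z, hz⟩⟩

variable {N : Type*} [Group N] {K : Subgroup N}

/-- Distinct translates of `K` under automorphisms of `N` commute elementwise. Elements of the
translates `φ • K` and `ψ • K` are written as `φ x` and `ψ y` with `x, y ∈ K`. -/
def HasCommutingTranslates (K : Subgroup N) : Prop :=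
  ∀ ⦃φ ψ : MulAut N⦄, φ • K ≠ ψ • K → ∀ ⦃x⦄, x ∈ K → ∀ ⦃y⦄, y ∈ K → Commute (φ x) (ψ y)

theorem HasCommutingTranslates.commute_of_smul_ne (hK : HasCommutingTranslates K) {φ : MulAut N}
    (hφ : φ • K ≠ K) {x y : N} (hx : x ∈ K) (hy : y ∈ K) : Commute x (φ y) :=
  hK (φ := 1) (by simpa using hφ.symm) hx hy

theorem apply_mem_of_smul_eq {A : MulAut N} (hA : A • K = K) {x : N} (hx : x ∈ K) : A x ∈ K :=
  hA.le (Subgroup.smul_mem_pointwise_smul x A K hx)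

theorem HasCommutingTranslates.twistedCommutator_orbitProd_mul_orbitProd
    (hK : HasCommutingTranslates K) {A C : MulAut N} {n : ℕ} (hA : 0 < MulAction.period A K)
    (hreturn : A ^ n • C • K = K) (hn : ∀ i < n, A ^ i • C • K ≠ K) {s t : N} (hs : s ∈ K)
    (ht : t ∈ K) :
    twistedCommutator A C (orbitProd A s (MulAction.period A K) * orbitProd A (C t) n) t =
      twistedCommutator (A ^ MulAction.period A K) (A ^ n * C) s t := by
  set m := MulAction.period A K
  have hA_commute {z : N} (hz : z ∈ K) (i : ℕ) (hi₀ : 0 < i) (hi : i < m) :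
      Commute z ((A ^ i) s) :=
    hK.commute_of_smul_ne (MulAction.pow_smul_ne_of_lt_period hi₀ hi) hz hs
  have hC_commute {z : N} (hz : z ∈ K) (i : ℕ) (hi : i < n) : Commute z ((A ^ i) (C t)) :=
    hK.commute_of_smul_ne (φ := A ^ i * C) (by rw [mul_smul]; exact hn i hi) hz ht
  have hCC_commute (i : ℕ) (hi : i ≤ n) : Commute (C t) ((A ^ i) (C t)) := by
    rcases i.eq_zero_or_pos with rfl | hi₀
    · exact Commute.refl _
    refine hK (ψ := A ^ i * C) (fun h => hn (n - i) (by lia) ?_) ht ht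
    rw [h, mul_smul, ← mul_smul, ← pow_add, Nat.sub_add_cancel hi, hreturn]
  have hfold (C' : MulAut N) :
      twistedCommutator A C' (orbitProd A s m) t = twistedCommutator (A ^ m) C' s t :=
    twistedCommutator_orbitProd_left hA (hA_commute hs) (hA_commute ht)
  rw [twistedCommutator_mul_orbitProd (fun i hi => ?_) hCC_commute, hfold]
  have hAs : (A ^ m) s ∈ K := apply_mem_of_smul_eq (MulAction.pow_period_smul A K) hs
  rw [hfold, twistedCommutator]
  exact (hC_commute (K.mul_mem (K.mul_mem (K.inv_mem hs) (K.inv_mem ht)) hAs) i hi).mul_left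
    (hCC_commute i hi.le)

theorem HasCommutingTranslates.exists_twistedCommutator_eq (hK : HasCommutingTranslates K)
    {A B : MulAut N} (hA : 0 < MulAction.period A K) (hB : 0 < MulAction.period B K) :
    ∃ A' B' : MulAut N, A' • K = K ∧ B' • K = K ∧ ∀ s ∈ K, ∀ t ∈ K, ∃ x y : N,
      twistedCommutator A B x y = twistedCommutator A' B' s t := by
  obtain ⟨k, n, hk, hreturn, hn, hdisjoint⟩ := exists_minimal_return hA hB
  set m := MulAction.period A K
  refine ⟨A ^ m, A ^ n * B ^ k, MulAction.pow_period_smul A K, by rwa [mul_smul], fun s hs t ht =>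
    ⟨orbitProd A s m * orbitProd A ((B ^ k) t) n, orbitProd B t k, ?_⟩⟩
  have hcommute {z : N} (hz : z ∈ K) (j : ℤ) (i : ℕ) (hi₀ : 0 < i) (hi : i < k) :
      Commute ((A ^ j) z) ((B ^ i) t) :=
    hK (hdisjoint i hi₀ hi j) hz ht
  have hu : (A ^ n) ((B ^ k) t) ∈ K :=
    apply_mem_of_smul_eq (A := A ^ n * B ^ k) (by rwa [mul_smul]) ht
  have ht_commute (i : ℕ) (hi₀ : 0 < i) (hi : i < k) : Commute t ((B ^ i) t) := by
    simpa using hcommute ht 0 i hi₀ hi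
  rw [twistedCommutator_orbitProd_right hk ht_commute fun i hi₀ hi => ?_,
    hK.twistedCommutator_orbitProd_mul_orbitProd hA hreturn hn hs ht]
  rw [map_mul, map_orbitProd, map_orbitProd]
  refine .mul_left (commute_orbitProd fun q _ => ?_).symm (commute_orbitProd fun q _ => ?_).symm
  · have hq : (A ^ q) (A s) = (A ^ (q + 1 : ℤ)) s := by
      rw [zpow_add_one, zpow_natCast, MulAut.mul_apply]
    rw [hq]
    exact (hcommute hs _ i hi₀ hi).symm
  · have hq : (A ^ q) (A ((B ^ k) t)) = (A ^ (q + 1 - n : ℤ)) ((A ^ n) ((B ^ k) t)) := by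
      rw [← zpow_natCast A n, ← MulAut.mul_apply _ (A ^ (_ : ℤ)), ← zpow_add, sub_add_cancel,
        zpow_add_one, zpow_natCast, MulAut.mul_apply]
    rw [hq]
    exact (hcommute hu _ i hi₀ hi).symm

/-- The automorphism of `K` induced by an automorphism of `N` that preserves `K`. -/
def restrictAut (A : MulAut N) (hA : A • K = K) : MulAut K :=
  (MulEquiv.subgroupMap A K).trans (MulEquiv.subgroupCongr hA)

theorem coe_twistedCommutatorProd_restrictAut {D : ℕ} {A B : Fin D → MulAut N}
    (hA : ∀ j, A j • K = K) (hB : ∀ j, B j • K = K) (s t : Fin D → K) :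
    ((twistedCommutatorProd (fun j => restrictAut (A j) (hA j))
        (fun j => restrictAut (B j) (hB j)) (s, t) : K) : N) =
      twistedCommutatorProd A B (fun j => s j, fun j => t j) := by
  rw [twistedCommutatorProd, ← K.subtype_apply, map_list_prod, List.map_ofFn]
  rfl

theorem HasCommutingTranslates.mul_mem_range_twistedCommutatorProd
    (hK : HasCommutingTranslates K) (hperiod : ∀ A : MulAut N, 0 < MulAction.period A K) {D : ℕ}
    (hsurj : ∀ α β : Fin D → MulAut K, Function.Surjective (twistedCommutatorProd α β))
    {α β : Fin D → MulAut N} {k g : N} (hk : k ∈ K)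
    (hg : g ∈ Set.range (twistedCommutatorProd α β)) :
    k * g ∈ Set.range (twistedCommutatorProd α β) := by
  obtain ⟨⟨a, b⟩, rfl⟩ := hg
  set c : Fin D → N := fun j => twistedCommutator (α j) (β j) (a j) (b j)
  choose A B hshift using fun j =>
    exists_twistedCommutator_eq_conj_mul (α j) (β j) (a j) (b j) (Fin.partialProd c j.castSucc)
  choose A' B' hA' hB' hreduce using fun j =>
    hK.exists_twistedCommutator_eq (hperiod (A j)) (hperiod (B j))
  obtain ⟨⟨s, t⟩, hst⟩ :=
    hsurj (fun j => restrictAut (A' j) (hA' j)) (fun j => restrictAut (B' j) (hB' j)) ⟨k, hk⟩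
  choose x' y' hxy' using fun j => hreduce j (s j) (s j).2 (t j) (t j).2
  choose x y hxy using fun j => hshift j (x' j) (y' j)
  have hk_eq : k = twistedCommutatorProd A' B' (fun j => s j, fun j => t j) := by
    rw [← coe_twistedCommutatorProd_restrictAut hA' hB', hst]
  refine ⟨(x, y), ?_⟩
  simp only [twistedCommutatorProd, hxy, hxy', hk_eq]
  exact prod_ofFn_partialProd_conj_mul c _

end CommutingTranslates

section Quasisimple

/-- A non-abelian simple group. -/
def IsNonabelianSimple (T : Type*) [Group T] : Prop :=
  IsSimpleGroup T ∧ ∃ a b : T, a * b ≠ b * a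

theorem IsNonabelianSimple.of_mulEquiv {T T' : Type*} [Group T] [Group T']
    (hT : IsNonabelianSimple T) (e : T ≃* T') : IsNonabelianSimple T' := by
  obtain ⟨_, a, b, hab⟩ := hT
  exact ⟨e.symm.isSimpleGroup, e a, e b, by rwa [← map_mul, ← map_mul, e.injective.ne_iff]⟩

theorem IsNonabelianSimple.center_eq_bot {T : Type*} [Group T] (hT : IsNonabelianSimple T) :
    Subgroup.center T = ⊥ := by
  obtain ⟨_, a, b, hab⟩ := hT
  refine (Subgroup.Normal.eq_bot_or_eq_top inferInstance).resolve_right fun htop => hab ?_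
  exact Subgroup.mem_center_iff.mp (htop.ge (Subgroup.mem_top b)) a

theorem IsNonabelianSimple.isPerfect {T : Type*} [Group T] (hT : IsNonabelianSimple T) :
    Group.IsPerfect T := by
  have := hT.1
  refine Group.isPerfect_def.mpr
    ((Subgroup.Normal.eq_bot_or_eq_top inferInstance).resolve_left fun hbot => ?_)
  have htop := (commutator_eq_bot_iff_center_eq_top T).mp hbot
  exact bot_ne_top (hT.center_eq_bot.symm.trans htop)

theorem commutator_le_of_le_sup_center {G : Type*} [Group G] {P H : Subgroup G}
    (hP : P ≤ H ⊔ Subgroup.center G) : ⁅P, P⁆ ≤ ⁅H, H⁆ := by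
  refine Subgroup.commutator_le.mpr fun g hg g' hg' => ?_
  obtain ⟨h, hh, z, hz, rfl⟩ := Subgroup.mem_sup_of_normal_right.mp (hP hg)
  obtain ⟨h', hh', z', hz', rfl⟩ := Subgroup.mem_sup_of_normal_right.mp (hP hg')
  have hz_comm (x : G) : ⁅z, x⁆ = 1 :=
    commutatorElement_eq_one_iff_mul_comm.mpr (Subgroup.mem_center_iff.mp hz x).symm
  have hz'_comm (x : G) : ⁅x, z'⁆ = 1 :=
    commutatorElement_eq_one_iff_mul_comm.mpr (Subgroup.mem_center_iff.mp hz' x)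
  have hcomm : ⁅h * z, h' * z'⁆ = ⁅h, h'⁆ := by
    simp [commutatorElement_mul_left_eq_conj_mul, commutatorElement_mul_right_eq_mul_conj,
      hz_comm, hz'_comm]
  exact hcomm ▸ Subgroup.commutator_mem_commutator hh hh'

theorem eq_top_of_sup_center_eq_top {G : Type*} [Group G] [Group.IsPerfect G] {H : Subgroup G}
    (hH : H ⊔ Subgroup.center G = ⊤) : H = ⊤ := by
  refine eq_top_iff.mpr ?_
  calc (⊤ : Subgroup G) = ⁅⊤, ⊤⁆ := Group.IsPerfect.commutator_eq_top.symm
    _ ≤ ⁅H, H⁆ := commutator_le_of_le_sup_center hH.ge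
    _ ≤ H := H.commutator_le_self

theorem IsQuasisimple.isPerfect {S : Type*} [Group S] (hS : IsQuasisimple S) :
    Group.IsPerfect S :=
  ⟨hS.1⟩

theorem isQuasisimple_of_surjective_s19 {S T : Type*} [Group S] [Group T] [Group.IsPerfect S]
    {f : S →* T} (hf : Function.Surjective f) (hker : f.ker ≤ Subgroup.center S)
    (hT : IsNonabelianSimple T) : IsQuasisimple S := by
  have hker_eq : f.ker = Subgroup.center S := by
    refine hker.antisymm fun z hz => MonoidHom.mem_ker.mpr ?_
    rw [← Subgroup.mem_bot, ← hT.center_eq_bot, Subgroup.mem_center_iff]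
    refine hf.forall.mpr fun g => ?_
    rw [← map_mul, ← map_mul, Subgroup.mem_center_iff.mp hz g]
  exact ⟨Group.IsPerfect.commutator_eq_top, hT.of_mulEquiv <|
    (QuotientGroup.quotientKerEquivOfSurjective f hf).symm.trans
      (QuotientGroup.quotientMulEquivOfEq hker_eq)⟩

theorem IsQuasisimple.of_mulEquiv {S S' : Type*} [Group S] [Group S'] (hS : IsQuasisimple S)
    (e : S ≃* S') : IsQuasisimple S' := by
  have := hS.isPerfect
  have : Group.IsPerfect S' := .ofSurjective (f := e.toMonoidHom) e.surjective
  let f : S' →* S ⧸ Subgroup.center S := (QuotientGroup.mk' _).comp e.symm.toMonoidHom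
  refine isQuasisimple_of_surjective_s19 (f := f)
    ((QuotientGroup.mk'_surjective _).comp e.symm.surjective) (fun z hz => ?_) hS.2
  have hz' : e.symm z ∈ Subgroup.center S := (QuotientGroup.eq_one_iff _).mp hz
  refine Subgroup.mem_center_iff.mpr fun g => e.symm.injective ?_
  rw [map_mul, map_mul, Subgroup.mem_center_iff.mp hz']

theorem IsQuasisimple.le_center_or_eq_top {S : Type*} [Group S] (hS : IsQuasisimple S)
    (M : Subgroup S) [hM : M.Normal] : M ≤ Subgroup.center S ∨ M = ⊤ := by
  have := hS.isPerfect
  have := hS.2.1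
  refine (hM.map _ (QuotientGroup.mk'_surjective (Subgroup.center S))).eq_bot_or_eq_top.imp
    (fun hbot => ?_) fun htop => eq_top_of_sup_center_eq_top ?_
  · rwa [Subgroup.map_eq_bot_iff, QuotientGroup.ker_mk'] at hbot
  · rw [← QuotientGroup.ker_mk' (Subgroup.center S), ← Subgroup.comap_map_eq, htop,
      Subgroup.comap_top]

end Quasisimple

section Components

variable {N : Type*} [Group N]

/-- The set of normal quasisimple subgroups of `N`. Components are usually required to be only
subnormal; in a quasi-semisimple group they are automatically normal. -/
def components (N : Type*) [Group N] : Set (Subgroup N) :=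
  {K | K.Normal ∧ IsQuasisimple K}

theorem smul_mem_components (A : MulAut N) {K : Subgroup N} (hK : K ∈ components N) :
    A • K ∈ components N :=
  ⟨hK.1.map A.toMonoidHom A.surjective, hK.2.of_mulEquiv (MulEquiv.subgroupMap A K)⟩

theorem period_pos_of_mem_components [Finite (components N)] (A : MulAut N) {K : Subgroup N}
    (hK : K ∈ components N) : 0 < MulAction.period A K := by
  have : Finite (MulAction.orbit (Subgroup.zpowers A) K) :=
    Set.Finite.subset (components N).toFinite <| by
      rintro _ ⟨φ, rfl⟩
      exact smul_mem_components (φ : MulAut N) hK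
  exact Nat.pos_of_ne_zero (MulAction.minimalPeriod_pos A K).out

/-- The three subgroups lemma applies because `K ∩ L` is central in `K` when `K ≰ L`. -/
theorem IsQuasisimple.le_or_commutator_eq_bot {K L : Subgroup N} [K.Normal] [L.Normal]
    (hK : IsQuasisimple K) : K ≤ L ∨ ⁅K, L⁆ = ⊥ := by
  have := hK.isPerfect
  refine (hK.le_center_or_eq_top (L.subgroupOf K)).symm.imp Subgroup.subgroupOf_eq_top.mp
    fun hcentral => ?_
  have hKLK : ⁅⁅K, L⁆, K⁆ = ⊥ := by
    refine eq_bot_iff.mpr (Subgroup.commutator_le.mpr fun g hg k hk => ?_)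
    obtain ⟨hgK, hgL⟩ := Subgroup.mem_inf.mp (Subgroup.commutator_le_inf K L hg)
    have hg_center : (⟨g, hgK⟩ : K) ∈ Subgroup.center K :=
      hcentral (Subgroup.mem_subgroupOf.mpr hgL)
    have hcomm := Subgroup.mem_center_iff.mp hg_center ⟨k, hk⟩
    exact commutatorElement_eq_one_iff_mul_comm.mpr (congrArg Subtype.val hcomm).symm
  have hKKL : ⁅⁅K, K⁆, L⁆ = ⊥ :=
    Subgroup.commutator_commutator_eq_bot_of_rotate hKLK (by rwa [Subgroup.commutator_comm L K])
  rwa [Subgroup.commutator_eq_self] at hKKL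

theorem commutator_eq_bot_of_mem_components {K L : Subgroup N} (hK : K ∈ components N)
    (hL : L ∈ components N) (hne : K ≠ L) : ⁅K, L⁆ = ⊥ := by
  have := hK.1
  have := hL.1
  rcases hK.2.le_or_commutator_eq_bot (L := L) with hKL | hbot
  · rcases hL.2.le_or_commutator_eq_bot (L := K) with hLK | hbot
    · exact absurd (hKL.antisymm hLK) hne
    · rwa [Subgroup.commutator_comm]
  · exact hbot

theorem hasCommutingTranslates_of_mem_components {K : Subgroup N} (hK : K ∈ components N) :
    HasCommutingTranslates K := by
  intro φ ψ hne x hx y hy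
  have hbot := commutator_eq_bot_of_mem_components (smul_mem_components φ hK)
    (smul_mem_components ψ hK) hne
  exact commutatorElement_eq_one_iff_commute.mp <| Subgroup.mem_bot.mp <| hbot ▸
    Subgroup.commutator_mem_commutator (Subgroup.smul_mem_pointwise_smul x φ K hx)
      (Subgroup.smul_mem_pointwise_smul y ψ K hy)

theorem isQuasisimple_of_isNonabelianSimple_map {Q : Type*} [Group Q] {f : N →* Q}
    (hker : f.ker ≤ Subgroup.center N) {K : Subgroup N} [Group.IsPerfect K]
    (hmap : IsNonabelianSimple (K.map f)) : IsQuasisimple K := by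
  refine isQuasisimple_of_surjective_s19 (f.subgroupMap_surjective K) (fun z hz => ?_) hmap
  have hz_center : (z : N) ∈ Subgroup.center N := hker (congrArg Subtype.val hz)
  exact Subgroup.mem_center_iff.mpr fun g => Subtype.ext (Subgroup.mem_center_iff.mp hz_center g)

theorem exists_mem_components_map_eq {Q : Type*} [Group Q] {f : N →* Q}
    (hf : Function.Surjective f) (hker : f.ker ≤ Subgroup.center N) {U : Subgroup Q}
    [hU : U.Normal] (hUs : IsNonabelianSimple U) : ∃ K ∈ components N, K.map f = U := by
  have := hUs.isPerfect
  set P := U.comap f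
  have := hU.comap f
  have hmap : ⁅P, P⁆.map f = U := by
    rw [Subgroup.map_commutator, Subgroup.map_comap_eq_self_of_surjective hf,
      Subgroup.commutator_eq_self]
  have hP : P ≤ ⁅P, P⁆ ⊔ Subgroup.center N :=
    calc P = ⁅P, P⁆ ⊔ f.ker := by rw [← Subgroup.comap_map_eq, hmap]
      _ ≤ ⁅P, P⁆ ⊔ Subgroup.center N := sup_le_sup_left hker _
  have : Group.IsPerfect (⁅P, P⁆ : Subgroup N) := Subgroup.isPerfect_iff.mpr <|
    (Subgroup.commutator_le_self _).antisymm (commutator_le_of_le_sup_center hP)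
  exact ⟨⁅P, P⁆, ⟨inferInstance, isQuasisimple_of_isNonabelianSimple_map hker (by rwa [hmap])⟩,
    hmap⟩

section Pi

variable {ι : Type*} [DecidableEq ι] {T : ι → Type*} [∀ i, Group (T i)]

theorem normal_range_mulSingle (i : ι) : (MonoidHom.mulSingle T i).range.Normal := by
  refine ⟨?_⟩
  rintro _ ⟨t, rfl⟩ g
  refine ⟨g i * t * (g i)⁻¹, funext fun j => ?_⟩
  rcases eq_or_ne j i with rfl | hj
  · simp
  · simp [Pi.mulSingle_eq_of_ne hj]

theorem range_mulSingle_injective [∀ i, Nontrivial (T i)] :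
    Function.Injective fun i => (MonoidHom.mulSingle T i).range := by
  intro i j hij
  obtain ⟨t, ht⟩ := exists_ne (1 : T i)
  obtain ⟨u, hu⟩ : MonoidHom.mulSingle T i t ∈ (MonoidHom.mulSingle T j).range :=
    hij.le ⟨t, rfl⟩
  by_contra hne
  refine ht ?_
  simpa [Pi.mulSingle_eq_of_ne hne] using (congrFun hu i).symm

end Pi

theorem iSup_components_eq_top [Finite (components N)] (hN : IsQuasiSemisimple N) :
    ⨆ K : components N, (K : Subgroup N) = ⊤ := by
  classical
  obtain ⟨hperfect, ι, T, _, hT, ⟨e⟩⟩ := hN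
  have : Group.IsPerfect N := ⟨hperfect⟩
  have (i : ι) : IsSimpleGroup (T i) := (hT i).1
  let f : N →* (i : ι) → T i := e.toMonoidHom.comp (QuotientGroup.mk' (Subgroup.center N))
  have hf : Function.Surjective f := e.surjective.comp (QuotientGroup.mk'_surjective _)
  have hker : f.ker = Subgroup.center N := by ext; simp [f]
  have hrange (i : ι) : ∃ K : components N, (K : Subgroup N).map f =
      (MonoidHom.mulSingle T i).range := by
    have := normal_range_mulSingle (T := T) i
    have hsimple : IsNonabelianSimple (MonoidHom.mulSingle T i).range :=
      IsNonabelianSimple.of_mulEquiv (hT i) (MonoidHom.ofInjective (Pi.mulSingle_injective i))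
    simpa using exists_mem_components_map_eq hf hker.le hsimple
  choose K hK using hrange
  have : Finite ι := Finite.of_injective K fun i j hij =>
    range_mulSingle_injective (T := T) (by simp only [← hK, hij])
  have hmap : (⨆ K : components N, (K : Subgroup N)).map f = ⊤ := by
    refine eq_top_iff.mpr fun x _ => Subgroup.pi_mem_of_mulSingle_mem x fun i => ?_
    refine Subgroup.map_mono (le_iSup (fun K : components N => (K : Subgroup N)) (K i)) ?_
    exact (hK i).ge ⟨x i, rfl⟩
  apply eq_top_of_sup_center_eq_top
  rw [← hker, ← Subgroup.comap_map_eq, hmap, Subgroup.comap_top]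

end Components

theorem quasisemisimple_twisted_commutators_general {D : ℕ} {N : Type*} [Group N]
    [Finite (components N)] (hN : IsQuasiSemisimple N)
    (hD : ∀ K ∈ components N, ∀ α β : Fin D → MulAut K,
      Function.Surjective (twistedCommutatorProd α β))
    (α β : Fin D → MulAut N) : Function.Surjective (twistedCommutatorProd α β) := by
  have hmul (k : N) : ∀ g ∈ Set.range (twistedCommutatorProd α β),
      k * g ∈ Set.range (twistedCommutatorProd α β) := by
    have hk : k ∈ ⨆ K : components N, (K : Subgroup N) :=
      (iSup_components_eq_top hN).ge (Subgroup.mem_top k)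
    exact Subgroup.iSup_induction
      (C := fun k => ∀ g ∈ Set.range (twistedCommutatorProd α β),
        k * g ∈ Set.range (twistedCommutatorProd α β)) _ hk
      (fun K k hk g hg =>
        (hasCommutingTranslates_of_mem_components K.2).mul_mem_range_twistedCommutatorProd
          (fun A => period_pos_of_mem_components A K.2) (hD K K.2) hk hg)
      (by simp) fun k l hk hl g hg => by rw [mul_assoc]; exact hk _ (hl g hg)
  intro g
  simpa using hmul g 1 ⟨1, twistedCommutatorProd_one α β⟩

/-- **Proposition 11.1.** Suppose `D` is such that in every finite quasisimple group,
every element is a product of `D` twisted commutators with respect to any prescribed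
automorphisms. Then for every finite quasi-semisimple group `N` and any automorphisms
`α₁,β₁,…,α_D,β_D` of `N`, the map
`θ(a,b) = ∏_{j=1}^{D} T_{α_j,β_j}(a_j,b_j)` from `N^{2D}` to `N` is surjective. -/
theorem quasisemisimple_twisted_commutators (D : ℕ)
    (hD : ∀ (S : Type) [Group S] [Finite S], IsQuasisimple S →
      ∀ (α β : Fin D → MulAut S) (s : S),
        ∃ x y : Fin D → S,
          (List.ofFn fun i => twistedCommutator (α i) (β i) (x i) (y i)).prod = s)
    (N : Type) [Group N] [Finite N] (hN : IsQuasiSemisimple N)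
    (α β : Fin D → MulAut N) :
    Function.Surjective (fun ab : (Fin D → N) × (Fin D → N) =>
      (List.ofFn fun j => twistedCommutator (α j) (β j) (ab.1 j) (ab.2 j)).prod) :=
  quasisemisimple_twisted_commutators_general hN
    (fun K hK α β s => let ⟨x, y, hxy⟩ := hD K hK.2 α β s; ⟨(x, y), hxy⟩) α β
end
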